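/- arXiv:1510.02194 — 7 statements merged into one kernel-verified Lean document; each statement's English description precedes it below -/
import Mathlib

section
/- Let v>0, β ≠ 0, B₂, B₃ ∈ ℝ, γ>1. Then A r_i = λ_i r_i for each i=1,…,6, where λ₁=−√α₊, λ₂=−β/√v, λ₃=−√α_−, λ₄=√α_−, λ₅=β/√v, λ₆=√α₊, and r₁ = ((v/α₊)(α₊−β²/v), −B₂, −B₃, (v/√α₊)(α₊−β²/v), −βB₂/√α₊, −βB₃/√α₊), r₂ = (0, βB₃, −βB₂, 0, β√v·B₃, −β√v·B₂), r₃ = ((v/α_−)(β²/v−α_−), B₂, B₃, (v/√α_−)(β²/v−α_−), βB₂/√α_−, βB₃/√α_−), r₄ = (−(v/α_−)(β²/v−α_−), −B₂, −B₃, (v/√α_−)(β²/v−α_−), βB₂/√α_−, βB₃/√α_−), r₅ = (0, βB₃, −βB₂, 0, −β√v·B₃, β√v·B₂), r₆ = (−(v/α₊)(α₊−β²/v), B₂, B₃, (v/√α₊)(α₊−β²/v), −βB₂/√α₊, −βB₃/√α₊). -/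
/-!
Let `s` be a nonzero speed with `s² = α`, and look for an eigenvector of `A` for `s` whose magnetic
components are `(B₂, B₃)`. The rows other than the fourth are solved by the remaining components,
and the fourth row becomes the quadratic equation
`α² - ((|B|² + β²)/v + c²) α + β² c²/v = 0`, whose roots are `α₊` and `α₋`. The choice `s = ±√α`
gives `r₁, r₃, r₄, r₆`, up to an overall sign. If instead the first and fourth components vanish
and the magnetic components are orthogonal to `(B₂, B₃)`, then the first and fourth rows are trivial
and the others reduce to `s² = β²/v`; the choice `s = β/w` with `w = ±√v` gives `r₂, r₅`.
-/

open Matrix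

namespace MHD

section Field

variable {K : Type*} [Field K] {v β B₂ B₃ c2 : K}

/-- The coefficient matrix of planar barotropic MHD in Lagrangian coordinates, for an arbitrary
squared Lagrangian sound speed `c2`. -/
def coeffMatrix (v β B₂ B₃ c2 : K) : Matrix (Fin 6) (Fin 6) K :=
  !![0, 0, 0, -1, 0, 0;
     0, 0, 0, B₂ / v, -(β / v), 0;
     0, 0, 0, B₃ / v, 0, -(β / v);
     -c2, B₂, B₃, 0, 0, 0;
     0, -β, 0, 0, 0, 0;
     0, 0, -β, 0, 0, 0]

/-- The sum of the squares of the fast and slow magnetosonic speeds. -/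
def speedSqSum (v β B₂ B₃ c2 : K) : K :=
  (B₂ ^ 2 + B₃ ^ 2 + β ^ 2) / v + c2

/-- The squared magnetosonic speeds: the roots `α` of the quadratic polynomial with root sum
`speedSqSum` and root product `β² c² / v`. -/
def IsMagnetosonicSpeedSq (v β B₂ B₃ c2 α : K) : Prop :=
  α ^ 2 - speedSqSum v β B₂ B₃ c2 * α + β ^ 2 * c2 / v = 0

/-- The discriminant of the quadratic polynomial satisfied by the squared magnetosonic speeds. -/
def speedSqDiscrim (v β B₂ B₃ c2 : K) : K :=
  speedSqSum v β B₂ B₃ c2 ^ 2 - 4 * β ^ 2 * c2 / v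

/-- The right eigenvector of a magnetosonic wave of speed `s`, normalized to have magnetic
components `B₂, B₃`. The argument `α` stands for `s ^ 2`. -/
def magnetosonicVector (v β B₂ B₃ α s : K) : Fin 6 → K :=
  ![-(v / α * (α - β ^ 2 / v)), B₂, B₃,
    v / s * (α - β ^ 2 / v), -(β * B₂ / s), -(β * B₃ / s)]

/-- The right eigenvector of an Alfvén wave of speed `β / w`, where `w` is a square root of `v`. -/
def alfvenVector (β B₂ B₃ w : K) : Fin 6 → K :=
  ![0, β * B₃, -(β * B₂), 0, -(β * w * B₃), β * w * B₂]

theorem isMagnetosonicSpeedSq_of_sq_eq_discrim [NeZero (2 : K)] {d : K}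
    (hd : d ^ 2 = speedSqDiscrim v β B₂ B₃ c2) :
    IsMagnetosonicSpeedSq v β B₂ B₃ c2 (1 / 2 * (speedSqSum v β B₂ B₃ c2 + d)) := by
  have complete_square (S P : K) :
      (1 / 2 * (S + d)) ^ 2 - S * (1 / 2 * (S + d)) + P = (d ^ 2 - (S ^ 2 - 4 * P)) / 2 ^ 2 := by
    field_simp
    ring
  rw [IsMagnetosonicSpeedSq, complete_square, hd, speedSqDiscrim]
  ring

theorem coeffMatrix_mulVec (v β B₂ B₃ c2 x₁ x₂ x₃ x₄ x₅ x₆ : K) :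
    coeffMatrix v β B₂ B₃ c2 *ᵥ ![x₁, x₂, x₃, x₄, x₅, x₆] =
      ![-x₄, B₂ / v * x₄ - β / v * x₅, B₃ / v * x₄ - β / v * x₆,
        -c2 * x₁ + B₂ * x₂ + B₃ * x₃, -β * x₂, -β * x₃] := by
  ext i
  fin_cases i <;> simp [coeffMatrix, Matrix.mulVec, dotProduct, Fin.sum_univ_succ] <;> ring

theorem coeffMatrix_mulVec_magnetosonicVector {α s : K} (hv : v ≠ 0) (hα : α ≠ 0)
    (h : IsMagnetosonicSpeedSq v β B₂ B₃ c2 α) (hs : s ^ 2 = α) :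
    coeffMatrix v β B₂ B₃ c2 *ᵥ magnetosonicVector v β B₂ B₃ α s =
      s • magnetosonicVector v β B₂ B₃ α s := by
  have hs₀ : s ≠ 0 := by
    rintro rfl
    exact hα (by simp [← hs])
  have volume_row : -(v / s * (α - β ^ 2 / v)) = s * -(v / α * (α - β ^ 2 / v)) := by
    rw [← hs]
    field_simp
  have induction_row (b : K) :
      b / v * (v / s * (α - β ^ 2 / v)) - β / v * -(β * b / s) = s * b := by
    rw [← hs]
    field_simp
    ring
  have momentum_row : -c2 * -(v / α * (α - β ^ 2 / v)) + B₂ * B₂ + B₃ * B₃ =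
      s * (v / s * (α - β ^ 2 / v)) := by
    unfold IsMagnetosonicSpeedSq speedSqSum at h
    field_simp at h ⊢
    linear_combination -h
  have transverse_row (b : K) : -β * b = s * -(β * b / s) := by
    field_simp
  simp only [magnetosonicVector, coeffMatrix_mulVec, smul_cons, smul_eq_mul, smul_empty,
    volume_row, induction_row, momentum_row, transverse_row]

theorem coeffMatrix_mulVec_alfvenVector {w : K} (hw : w ≠ 0) (hwv : w ^ 2 = v) :
    coeffMatrix v β B₂ B₃ c2 *ᵥ alfvenVector β B₂ B₃ w =
      (β / w) • alfvenVector β B₂ B₃ w := by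
  subst hwv
  have induction_row (b : K) : β / w ^ 2 * (β * w * b) = β / w * (β * b) := by
    field_simp
  have momentum_row (b : K) : β * (β * b) = β / w * (β * w * b) := by
    field_simp
  have longitudinal_row : B₂ * (β * B₃) + -(B₃ * (β * B₂)) = 0 := by
    ring
  simp [alfvenVector, coeffMatrix_mulVec, induction_row, momentum_row, longitudinal_row]

end Field

section Real

variable {v β B₂ B₃ c2 : ℝ}

/-- The squared fast magnetosonic speed `α₊`. -/
noncomputable def fastSpeedSq (v β B₂ B₃ c2 : ℝ) : ℝ :=
  1 / 2 * (speedSqSum v β B₂ B₃ c2 + √(speedSqDiscrim v β B₂ B₃ c2))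

/-- The squared slow magnetosonic speed `α₋`. -/
noncomputable def slowSpeedSq (v β B₂ B₃ c2 : ℝ) : ℝ :=
  1 / 2 * (speedSqSum v β B₂ B₃ c2 - √(speedSqDiscrim v β B₂ B₃ c2))

/-- The characteristic speeds `λ₁, …, λ₆`, indexed from `0`; `αp` and `αm` stand for the squared
fast and slow speeds. -/
noncomputable def eigenvalue (v β αp αm : ℝ) : Fin 6 → ℝ :=
  ![-√αp, -(β / √v), -√αm, √αm, β / √v, √αp]

/-- The right eigenvectors `r₁, …, r₆` in the normalization of the theorem, indexed from `0`; `αp`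
and `αm` stand for the squared fast and slow speeds. -/
noncomputable def eigenvector (v β B₂ B₃ αp αm : ℝ) : Fin 6 → Fin 6 → ℝ :=
  ![![v / αp * (αp - β ^ 2 / v), -B₂, -B₃,
      v / √αp * (αp - β ^ 2 / v), -(β * B₂ / √αp), -(β * B₃ / √αp)],
    ![0, β * B₃, -(β * B₂), 0, β * √v * B₃, -(β * √v * B₂)],
    ![v / αm * (β ^ 2 / v - αm), B₂, B₃,
      v / √αm * (β ^ 2 / v - αm), β * B₂ / √αm, β * B₃ / √αm],
    ![-(v / αm * (β ^ 2 / v - αm)), -B₂, -B₃,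
      v / √αm * (β ^ 2 / v - αm), β * B₂ / √αm, β * B₃ / √αm],
    ![0, β * B₃, -(β * B₂), 0, -(β * √v * B₃), β * √v * B₂],
    ![-(v / αp * (αp - β ^ 2 / v)), B₂, B₃,
      v / √αp * (αp - β ^ 2 / v), -(β * B₂ / √αp), -(β * B₃ / √αp)]]

theorem eigenvector_eq (v β B₂ B₃ αp αm : ℝ) :
    eigenvector v β B₂ B₃ αp αm =
      ![-magnetosonicVector v β B₂ B₃ αp (-√αp), alfvenVector β B₂ B₃ (-√v),
        magnetosonicVector v β B₂ B₃ αm (-√αm), -magnetosonicVector v β B₂ B₃ αm √αm,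
        alfvenVector β B₂ B₃ √v, magnetosonicVector v β B₂ B₃ αp √αp] := by
  have mul_sub_swap (a α : ℝ) : a * (β ^ 2 / v - α) = -(a * (α - β ^ 2 / v)) := by ring
  simp [eigenvector, magnetosonicVector, alfvenVector, div_neg, mul_sub_swap]

theorem speedSqDiscrim_nonneg (hv : 0 < v) (hc2 : 0 ≤ c2) :
    0 ≤ speedSqDiscrim v β B₂ B₃ c2 := by
  have sum_of_nonneg : speedSqDiscrim v β B₂ B₃ c2 =
      (β ^ 2 / v - c2) ^ 2 + ((B₂ ^ 2 + B₃ ^ 2) / v) ^ 2 +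
        2 * ((B₂ ^ 2 + B₃ ^ 2) / v) * (β ^ 2 / v + c2) := by
    unfold speedSqDiscrim speedSqSum
    ring
  rw [sum_of_nonneg]
  positivity

theorem slowSpeedSq_pos (hv : 0 < v) (hβ : β ≠ 0) (hc2 : 0 < c2) :
    0 < slowSpeedSq v β B₂ B₃ c2 := by
  have sum_pos : 0 < speedSqSum v β B₂ B₃ c2 := by
    unfold speedSqSum
    positivity
  have discrim_lt : speedSqDiscrim v β B₂ B₃ c2 < speedSqSum v β B₂ B₃ c2 ^ 2 :=
    sub_lt_self _ (by positivity)
  have sqrt_lt : √(speedSqDiscrim v β B₂ B₃ c2) < speedSqSum v β B₂ B₃ c2 :=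
    (Real.sqrt_lt' sum_pos).2 discrim_lt
  exact mul_pos one_half_pos (sub_pos.2 sqrt_lt)

theorem slowSpeedSq_le_fastSpeedSq (v β B₂ B₃ c2 : ℝ) :
    slowSpeedSq v β B₂ B₃ c2 ≤ fastSpeedSq v β B₂ B₃ c2 := by
  unfold slowSpeedSq fastSpeedSq
  linarith [Real.sqrt_nonneg (speedSqDiscrim v β B₂ B₃ c2)]

theorem isMagnetosonicSpeedSq_fastSpeedSq (hv : 0 < v) (hc2 : 0 ≤ c2) :
    IsMagnetosonicSpeedSq v β B₂ B₃ c2 (fastSpeedSq v β B₂ B₃ c2) :=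
  isMagnetosonicSpeedSq_of_sq_eq_discrim (Real.sq_sqrt (speedSqDiscrim_nonneg hv hc2))

theorem isMagnetosonicSpeedSq_slowSpeedSq (hv : 0 < v) (hc2 : 0 ≤ c2) :
    IsMagnetosonicSpeedSq v β B₂ B₃ c2 (slowSpeedSq v β B₂ B₃ c2) :=
  isMagnetosonicSpeedSq_of_sq_eq_discrim <|
    (neg_sq _).trans (Real.sq_sqrt (speedSqDiscrim_nonneg hv hc2))

theorem coeffMatrix_mulVec_eigenvector {αp αm : ℝ} (hv : 0 < v) (hαp : 0 < αp) (hαm : 0 < αm)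
    (hp : IsMagnetosonicSpeedSq v β B₂ B₃ c2 αp) (hm : IsMagnetosonicSpeedSq v β B₂ B₃ c2 αm)
    (i : Fin 6) :
    coeffMatrix v β B₂ B₃ c2 *ᵥ eigenvector v β B₂ B₃ αp αm i =
      eigenvalue v β αp αm i • eigenvector v β B₂ B₃ αp αm i := by
  have neg_sqrt_sq {x : ℝ} (hx : 0 < x) : (-√x) ^ 2 = x := by rw [neg_sq, Real.sq_sqrt hx.le]
  have fast {s : ℝ} (hs : s ^ 2 = αp) :=
    coeffMatrix_mulVec_magnetosonicVector hv.ne' hαp.ne' hp hs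
  have slow {s : ℝ} (hs : s ^ 2 = αm) :=
    coeffMatrix_mulVec_magnetosonicVector hv.ne' hαm.ne' hm hs
  have hw : √v ≠ 0 := (Real.sqrt_pos.2 hv).ne'
  rw [eigenvector_eq]
  fin_cases i
  · simp [eigenvalue, mulVec_neg, fast (neg_sqrt_sq hαp)]
  · simp [eigenvalue, coeffMatrix_mulVec_alfvenVector (neg_ne_zero.2 hw) (neg_sqrt_sq hv), div_neg]
  · exact slow (neg_sqrt_sq hαm)
  · simp [eigenvalue, mulVec_neg, slow (Real.sq_sqrt hαm.le)]
  · exact coeffMatrix_mulVec_alfvenVector hw (Real.sq_sqrt hv.le)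
  · exact fast (Real.sq_sqrt hαp.le)

end Real

end MHD

open MHD in
theorem mhd_eigenvectors_general {v β c2 : ℝ} (B₂ B₃ : ℝ) (hv : 0 < v) (hβ : β ≠ 0)
    (hc2 : 0 < c2) (i : Fin 6) :
    let αp := fastSpeedSq v β B₂ B₃ c2
    let αm := slowSpeedSq v β B₂ B₃ c2
    coeffMatrix v β B₂ B₃ c2 *ᵥ eigenvector v β B₂ B₃ αp αm i =
      eigenvalue v β αp αm i • eigenvector v β B₂ B₃ αp αm i :=
  have slow_pos := slowSpeedSq_pos hv hβ hc2
  coeffMatrix_mulVec_eigenvector hv (slow_pos.trans_le (slowSpeedSq_le_fastSpeedSq ..)) slow_pos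
    (isMagnetosonicSpeedSq_fastSpeedSq hv hc2.le) (isMagnetosonicSpeedSq_slowSpeedSq hv hc2.le) i

/-- For `v > 0`, `β ≠ 0`, `γ > 1`, the six vectors `r₁,…,r₆` are eigenvectors of the
planar isentropic MHD coefficient matrix `A` with eigenvalues
`λ₁ = −√α₊, λ₂ = −β/√v, λ₃ = −√α₋, λ₄ = √α₋, λ₅ = β/√v, λ₆ = √α₊`. -/
theorem mhd_eigenvectors
    (v β B₂ B₃ γ : ℝ) (hv : 0 < v) (hβ : β ≠ 0) (hγ : 1 < γ)
    (c2 αp αm : ℝ) (hc2 : c2 = γ * v ^ (-γ - 1))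
    (hαp : αp = (1 / 2) * ((B₂ ^ 2 + B₃ ^ 2 + β ^ 2) / v + c2 +
      Real.sqrt (((B₂ ^ 2 + B₃ ^ 2 + β ^ 2) / v + c2) ^ 2 - 4 * β ^ 2 * c2 / v)))
    (hαm : αm = (1 / 2) * ((B₂ ^ 2 + B₃ ^ 2 + β ^ 2) / v + c2 -
      Real.sqrt (((B₂ ^ 2 + B₃ ^ 2 + β ^ 2) / v + c2) ^ 2 - 4 * β ^ 2 * c2 / v)))
    (A : Matrix (Fin 6) (Fin 6) ℝ)
    (hA : A = !![0, 0, 0, -1, 0, 0;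
                 0, 0, 0, B₂ / v, -(β / v), 0;
                 0, 0, 0, B₃ / v, 0, -(β / v);
                 -c2, B₂, B₃, 0, 0, 0;
                 0, -β, 0, 0, 0, 0;
                 0, 0, -β, 0, 0, 0]) :
    (A.mulVec ![v / αp * (αp - β ^ 2 / v), -B₂, -B₃,
        v / Real.sqrt αp * (αp - β ^ 2 / v), -(β * B₂ / Real.sqrt αp), -(β * B₃ / Real.sqrt αp)] =
      (-Real.sqrt αp) • ![v / αp * (αp - β ^ 2 / v), -B₂, -B₃,
        v / Real.sqrt αp * (αp - β ^ 2 / v), -(β * B₂ / Real.sqrt αp), -(β * B₃ / Real.sqrt αp)]) ∧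
    (A.mulVec ![0, β * B₃, -(β * B₂), 0, β * Real.sqrt v * B₃, -(β * Real.sqrt v * B₂)] =
      (-(β / Real.sqrt v)) •
        ![0, β * B₃, -(β * B₂), 0, β * Real.sqrt v * B₃, -(β * Real.sqrt v * B₂)]) ∧
    (A.mulVec ![v / αm * (β ^ 2 / v - αm), B₂, B₃,
        v / Real.sqrt αm * (β ^ 2 / v - αm), β * B₂ / Real.sqrt αm, β * B₃ / Real.sqrt αm] =
      (-Real.sqrt αm) • ![v / αm * (β ^ 2 / v - αm), B₂, B₃,
        v / Real.sqrt αm * (β ^ 2 / v - αm), β * B₂ / Real.sqrt αm, β * B₃ / Real.sqrt αm]) ∧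
    (A.mulVec ![-(v / αm * (β ^ 2 / v - αm)), -B₂, -B₃,
        v / Real.sqrt αm * (β ^ 2 / v - αm), β * B₂ / Real.sqrt αm, β * B₃ / Real.sqrt αm] =
      (Real.sqrt αm) • ![-(v / αm * (β ^ 2 / v - αm)), -B₂, -B₃,
        v / Real.sqrt αm * (β ^ 2 / v - αm), β * B₂ / Real.sqrt αm, β * B₃ / Real.sqrt αm]) ∧
    (A.mulVec ![0, β * B₃, -(β * B₂), 0, -(β * Real.sqrt v * B₃), β * Real.sqrt v * B₂] =
      (β / Real.sqrt v) •
        ![0, β * B₃, -(β * B₂), 0, -(β * Real.sqrt v * B₃), β * Real.sqrt v * B₂]) ∧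
    (A.mulVec ![-(v / αp * (αp - β ^ 2 / v)), B₂, B₃,
        v / Real.sqrt αp * (αp - β ^ 2 / v), -(β * B₂ / Real.sqrt αp), -(β * B₃ / Real.sqrt αp)] =
      (Real.sqrt αp) • ![-(v / αp * (αp - β ^ 2 / v)), B₂, B₃,
        v / Real.sqrt αp * (αp - β ^ 2 / v), -(β * B₂ / Real.sqrt αp), -(β * B₃ / Real.sqrt αp)]) := by
  subst hαp hαm hA
  have hc2_pos : 0 < c2 := hc2 ▸ mul_pos (zero_lt_one.trans hγ) (Real.rpow_pos_of_pos hv _)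
  have h := mhd_eigenvectors_general B₂ B₃ hv hβ hc2_pos
  exact ⟨h 0, h 1, h 2, h 3, h 4, h 5⟩
end

section
/- Let v>0, β>0, (B₂,B₃) ≠ (0,0), γ>1. Then the six eigenvalues of A are pairwise distinct and strictly ordered: −√α₊ < −β/√v < −√α_− < 0 < √α_− < β/√v < √α₊. In particular the planar isentropic MHD system is strictly hyperbolic at such states. -/
/-!
With `s = (|B|² + β²)/v + c²` and `p = β² c²/v`, the numbers `α₋ ≤ α₊` are the roots of
`q(x) = x² - s x + p`. At the squared Alfvén speed `a = β²/v` one computes `q(a) = -a |B|²/v < 0`,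
so `α₋ < a < α₊`; since `s` and `p` are positive, so is `α₋`. Taking square roots and reflecting
gives the ordering.
-/

/-- The smaller root of the monic quadratic `x² - s x + p`, parametrized by the sum `s` and the
product `p` of its roots; meaningful when `4 p ≤ s²`, as `√` vanishes on negative numbers. -/
noncomputable def lowerRoot (s p : ℝ) : ℝ := (s - √(s ^ 2 - 4 * p)) / 2

/-- The larger root of the monic quadratic `x² - s x + p`, with the same conventions as
`lowerRoot`. -/
noncomputable def upperRoot (s p : ℝ) : ℝ := (s + √(s ^ 2 - 4 * p)) / 2

section Quadratic

variable {s p x : ℝ}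

lemma abs_two_mul_sub_lt_sqrt_discrim (hx : x ^ 2 - s * x + p < 0) :
    |2 * x - s| < √(s ^ 2 - 4 * p) :=
  Real.lt_sqrt_of_sq_lt (by rw [sq_abs]; linear_combination 4 * hx)

lemma lowerRoot_lt_of_quadratic_neg (hx : x ^ 2 - s * x + p < 0) : lowerRoot s p < x := by
  have h := (abs_lt.mp (abs_two_mul_sub_lt_sqrt_discrim hx)).1
  rw [lowerRoot]
  linarith

lemma lt_upperRoot_of_quadratic_neg (hx : x ^ 2 - s * x + p < 0) : x < upperRoot s p := by
  have h := (abs_lt.mp (abs_two_mul_sub_lt_sqrt_discrim hx)).2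
  rw [upperRoot]
  linarith

lemma lowerRoot_pos (hs : 0 < s) (hp : 0 < p) : 0 < lowerRoot s p := by
  have h : √(s ^ 2 - 4 * p) < s := (Real.sqrt_lt' hs).mpr (by linarith)
  rw [lowerRoot]
  linarith

end Quadratic

lemma sq_add_sq_pos_of_ne_zero {x y : ℝ} (h : (x, y) ≠ (0, 0)) : 0 < x ^ 2 + y ^ 2 := by
  by_cases hx : x = 0
  · have hy : y ≠ 0 := fun hy => h (by rw [hx, hy])
    positivity
  · positivity

lemma magnetosonic_quadratic_alfven_neg {a b : ℝ} (c : ℝ) (ha : 0 < a) (hb : 0 < b) :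
    a ^ 2 - (b + a + c) * a + a * c < 0 :=
  calc a ^ 2 - (b + a + c) * a + a * c = -(a * b) := by ring
    _ < 0 := neg_neg_of_pos (mul_pos ha hb)

lemma sqrt_strict_order {x y z : ℝ} (hx : 0 < x) (hxy : x < y) (hyz : y < z) :
    -√z < -√y ∧ -√y < -√x ∧ -√x < 0 ∧ 0 < √x ∧ √x < √y ∧ √y < √z := by
  have hx' : 0 < √x := Real.sqrt_pos.mpr hx
  have hxy' : √x < √y := Real.sqrt_lt_sqrt hx.le hxy
  have hyz' : √y < √z := Real.sqrt_lt_sqrt (hx.trans hxy).le hyz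
  exact ⟨neg_lt_neg hyz', neg_lt_neg hxy', neg_neg_of_pos hx', hx', hxy', hyz'⟩

theorem mhd_strict_hyperbolicity_general
    (v β B₂ B₃ : ℝ) (hv : 0 < v) (hβ : β ≠ 0) (hB : (B₂, B₃) ≠ (0, 0))
    (c2 αp αm : ℝ) (hc2 : 0 < c2)
    (hαp : αp = (1 / 2) * ((B₂ ^ 2 + B₃ ^ 2 + β ^ 2) / v + c2 +
      √(((B₂ ^ 2 + B₃ ^ 2 + β ^ 2) / v + c2) ^ 2 - 4 * β ^ 2 * c2 / v)))
    (hαm : αm = (1 / 2) * ((B₂ ^ 2 + B₃ ^ 2 + β ^ 2) / v + c2 -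
      √(((B₂ ^ 2 + B₃ ^ 2 + β ^ 2) / v + c2) ^ 2 - 4 * β ^ 2 * c2 / v))) :
    -√αp < -(|β| / √v) ∧ -(|β| / √v) < -√αm ∧ -√αm < 0 ∧
      0 < √αm ∧ √αm < |β| / √v ∧ |β| / √v < √αp := by
  set a := β ^ 2 / v with ha
  set b := (B₂ ^ 2 + B₃ ^ 2) / v
  have ha_pos : 0 < a := by positivity
  have hb_pos : 0 < b := div_pos (sq_add_sq_pos_of_ne_zero hB) hv
  have hsum : (B₂ ^ 2 + B₃ ^ 2 + β ^ 2) / v = b + a := add_div ..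
  have hprod : 4 * β ^ 2 * c2 / v = 4 * (a * c2) := by ring
  have hαp_root : αp = upperRoot (b + a + c2) (a * c2) := by
    rw [hαp, hsum, hprod, upperRoot, one_div_mul_eq_div]
  have hαm_root : αm = lowerRoot (b + a + c2) (a * c2) := by
    rw [hαm, hsum, hprod, lowerRoot, one_div_mul_eq_div]
  have halfven : |β| / √v = √a := by
    rw [ha, Real.sqrt_div (sq_nonneg β), Real.sqrt_sq_eq_abs]
  have hneg := magnetosonic_quadratic_alfven_neg c2 ha_pos hb_pos
  rw [halfven, hαp_root, hαm_root]
  exact sqrt_strict_order (lowerRoot_pos (by positivity) (by positivity))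
    (lowerRoot_lt_of_quadratic_neg hneg) (lt_upperRoot_of_quadratic_neg hneg)

/-- For `v > 0`, `β > 0`, `(B₂,B₃) ≠ (0,0)` and `γ > 1`, the six eigenvalues of the
MHD coefficient matrix are pairwise distinct and strictly ordered:
`−√α₊ < −β/√v < −√α₋ < 0 < √α₋ < β/√v < √α₊` (strict hyperbolicity). -/
theorem mhd_strict_hyperbolicity
    (v β B₂ B₃ γ : ℝ) (hv : 0 < v) (hβ : 0 < β) (hB : (B₂, B₃) ≠ (0, 0)) (hγ : 1 < γ)
    (c2 αp αm : ℝ) (hc2 : c2 = γ * v ^ (-γ - 1))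
    (hαp : αp = (1 / 2) * ((B₂ ^ 2 + B₃ ^ 2 + β ^ 2) / v + c2 +
      Real.sqrt (((B₂ ^ 2 + B₃ ^ 2 + β ^ 2) / v + c2) ^ 2 - 4 * β ^ 2 * c2 / v)))
    (hαm : αm = (1 / 2) * ((B₂ ^ 2 + B₃ ^ 2 + β ^ 2) / v + c2 -
      Real.sqrt (((B₂ ^ 2 + B₃ ^ 2 + β ^ 2) / v + c2) ^ 2 - 4 * β ^ 2 * c2 / v))) :
    -Real.sqrt αp < -(β / Real.sqrt v) ∧
    -(β / Real.sqrt v) < -Real.sqrt αm ∧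
    -Real.sqrt αm < 0 ∧
    (0 : ℝ) < Real.sqrt αm ∧
    Real.sqrt αm < β / Real.sqrt v ∧
    β / Real.sqrt v < Real.sqrt αp := by
  have hc2_pos : 0 < c2 := hc2 ▸ mul_pos (zero_lt_one.trans hγ) (Real.rpow_pos_of_pos hv _)
  simpa only [abs_of_pos hβ] using
    mhd_strict_hyperbolicity_general v β B₂ B₃ hv hβ.ne' hB c2 αp αm hc2_pos hαp hαm
end

section
/- Let γ>1 and β ≠ 0 be fixed. On the open set {(v,B₂,B₃) : v>0, (B₂,B₃) ≠ (0,0)}, regard λ₁ = −√α₊, λ₃ = −√α_−, λ₄ = √α_−, λ₆ = √α₊ as smooth functions of (v,B₂,B₃). Then at every such point: (i) the directional derivative of λ₁ in the direction ((v/α₊)(α₊−β²/v), −B₂, −B₃) is strictly positive; (ii) the directional derivative of λ₃ in the direction ((v/α_−)(β²/v−α_−), B₂, B₃) is strictly positive; (iii) the directional derivative of λ₄ in the direction (−(v/α_−)(β²/v−α_−), −B₂, −B₃) is strictly positive; (iv) the directional derivative of λ₆ in the direction (−(v/α₊)(α₊−β²/v), B₂, B₃) is strictly positive. (These directions are the first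 three components of the eigenvectors r₁, r₃, r₄, r₆, so the 1st, 3rd, 4th and 6th characteristic fields are genuinely nonlinear.) -/
/-!
The numbers `α₊`, `α₋` are the roots of `x² - T x + P` with `T = (|B|² + β²) / v + c²` and
`P = β² c² / v`, equivalently of `(x - c²) (x - β² / v) = x |B|² / v`. Differentiating the quadratic
along a curve gives `(2 α - T) α' = α T' - P'`, where `2 α - T = ±√(T² - 4 P)`. Along the direction
`(-(v / α) (α - β² / v), B)` the right-hand side collapses, by the factored equation, to
`3 α |B|² / v - (c²)' (v / α) (α - β² / v)²`, which is positive as soon as `(c²)' ≤ 0`. So `√α₊`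
and `-√α₋` increase in their respective directions; the remaining two fields arise by reversing both
the eigenvalue and the direction.
-/

section QuadraticRoot

variable {σ T P : ℝ}

/-- The roots of `x² - T x + P`: the larger one for `σ = 1`, the smaller one for `σ = -1`. For
`T² < 4 P` the value is `T / 2`, which is not a root, since `√` of a negative number is `0`. -/
noncomputable def quadraticRoot (σ T P : ℝ) : ℝ := (T + σ * √(T ^ 2 - 4 * P)) / 2

theorem quadraticRoot_isRoot (hσ : σ ^ 2 = 1) (hdisc : 0 ≤ T ^ 2 - 4 * P) :
    quadraticRoot σ T P ^ 2 - T * quadraticRoot σ T P + P = 0 := by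
  have hsqrt : √(T ^ 2 - 4 * P) ^ 2 = T ^ 2 - 4 * P := Real.sq_sqrt hdisc
  unfold quadraticRoot
  linear_combination √(T ^ 2 - 4 * P) ^ 2 / 4 * hσ + hsqrt / 4

theorem quadraticRoot_pos (hσ : σ ^ 2 = 1) (hT : 0 < T) (hP : 0 < P) :
    0 < quadraticRoot σ T P := by
  have hlt : √(T ^ 2 - 4 * P) < T := (Real.sqrt_lt' hT).2 (by linarith)
  have hnonneg : 0 ≤ √(T ^ 2 - 4 * P) := Real.sqrt_nonneg _
  unfold quadraticRoot
  rcases sq_eq_one_iff.1 hσ with rfl | rfl <;> linarith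

theorem hasDerivAt_quadraticRoot {T P : ℝ → ℝ} {T' P' t : ℝ} (hσ : σ ^ 2 = 1)
    (hT : HasDerivAt T T' t) (hP : HasDerivAt P P' t) (hdisc : 0 < T t ^ 2 - 4 * P t) :
    HasDerivAt (fun s => quadraticRoot σ (T s) (P s))
      (σ * (quadraticRoot σ (T t) (P t) * T' - P') / √(T t ^ 2 - 4 * P t)) t := by
  have hsqrt_ne : √(T t ^ 2 - 4 * P t) ≠ 0 := (Real.sqrt_pos.2 hdisc).ne'
  have hsqrt := ((hT.fun_pow 2).fun_sub (hP.const_mul 4)).sqrt hdisc.ne'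
  refine ((hT.fun_add (hsqrt.const_mul σ)).div_const 2).congr_deriv ?_
  unfold quadraticRoot
  field_simp [hsqrt_ne]
  push_cast
  linear_combination -(2 * √(T t ^ 2 - 4 * P t) * T') * hσ

end QuadraticRoot

section Magnetosonic

variable {σ β κ v b : ℝ}

/-- The squared magnetosonic wave speed `α₊` (fast, `σ = 1`) or `α₋` (slow, `σ = -1`), as a function
of the squared sound speed `κ = c²`, the specific volume `v` and `b = |B|²`. -/
noncomputable def magnetosonicSq (σ β κ v b : ℝ) : ℝ :=
  quadraticRoot σ ((b + β ^ 2) / v + κ) (β ^ 2 * κ / v)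

/-- The discriminant of the quadratic equation satisfied by the squared magnetosonic speeds, with
the variables of `magnetosonicSq`. -/
noncomputable def magnetosonicDiscrim (β κ v b : ℝ) : ℝ :=
  ((b + β ^ 2) / v + κ) ^ 2 - 4 * (β ^ 2 * κ / v)

theorem magnetosonicDiscrim_pos (hκ : 0 < κ) (hv : 0 < v) (hb : 0 < b) :
    0 < magnetosonicDiscrim β κ v b := by
  have hsum : magnetosonicDiscrim β κ v b =
      ((b + β ^ 2) / v - κ) ^ 2 + 4 * κ * b / v := by
    unfold magnetosonicDiscrim
    ring
  rw [hsum]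
  positivity

theorem magnetosonicSq_pos (hσ : σ ^ 2 = 1) (hβ : β ≠ 0) (hκ : 0 < κ) (hv : 0 < v) (hb : 0 ≤ b) :
    0 < magnetosonicSq σ β κ v b :=
  quadraticRoot_pos hσ (by positivity) (by positivity)

theorem magnetosonicSq_dispersion_relation (hσ : σ ^ 2 = 1)
    (hdisc : 0 ≤ magnetosonicDiscrim β κ v b) :
    (magnetosonicSq σ β κ v b - κ) * (magnetosonicSq σ β κ v b - β ^ 2 / v) =
      magnetosonicSq σ β κ v b * b / v := by
  have hroot : magnetosonicSq σ β κ v b ^ 2 - ((b + β ^ 2) / v + κ) * magnetosonicSq σ β κ v b +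
      β ^ 2 * κ / v = 0 := quadraticRoot_isRoot hσ hdisc
  linear_combination hroot

theorem hasDerivAt_magnetosonicSq {c V b : ℝ → ℝ} {c' V' b' t α : ℝ} (hσ : σ ^ 2 = 1)
    (hc : HasDerivAt c c' (V t)) (hV : HasDerivAt V V' t) (hb : HasDerivAt b b' t) (hVt : V t ≠ 0)
    (hdisc : 0 < magnetosonicDiscrim β (c (V t)) (V t) (b t))
    (hα : α = magnetosonicSq σ β (c (V t)) (V t) (b t)) :
    HasDerivAt (fun s => magnetosonicSq σ β (c (V s)) (V s) (b s))
      (σ * (α * b' / V t - α * (α - c (V t)) * V' / V t + (α - β ^ 2 / V t) * (c' * V')) /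
        √(magnetosonicDiscrim β (c (V t)) (V t) (b t))) t := by
  have hcV : HasDerivAt (fun s => c (V s)) (c' * V') t := hc.comp t hV
  have htrace := ((hb.add_const (β ^ 2)).fun_div hV hVt).fun_add hcV
  have hprod := (hcV.const_mul (β ^ 2)).fun_div hV hVt
  have hdispersion := magnetosonicSq_dispersion_relation hσ hdisc.le
  refine (hasDerivAt_quadraticRoot hσ htrace hprod hdisc).congr_deriv ?_
  rw [← magnetosonicSq, ← magnetosonicDiscrim, ← hα]
  rw [← hα] at hdispersion
  congr 2
  linear_combination (norm := (field_simp; ring)) V' / V t * hdispersion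

end Magnetosonic

section LineDeriv

theorem lineDeriv_neg_neg {𝕜 E F : Type*} [NontriviallyNormedField 𝕜] [AddCommGroup E] [Module 𝕜 E]
    [NormedAddCommGroup F] [NormedSpace 𝕜 F] (f : E → F) (x u : E) :
    lineDeriv 𝕜 (fun y => -f y) x (-u) = lineDeriv 𝕜 f x u := by
  rw [lineDeriv_neg, lineDeriv, deriv.fun_neg, neg_neg, lineDeriv]

variable {E : Type*} [AddCommGroup E] [Module ℝ E]

theorem hasLineDerivAt_quadraticForm_self (q : QuadraticForm ℝ E) (x : E) :
    HasLineDerivAt ℝ q (2 * q x) x x := by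
  have hscale : (fun t : ℝ => q (x + t • x)) = fun t => (1 + t) ^ 2 * q x := by
    funext t
    rw [show x + t • x = (1 + t) • x by module, QuadraticMap.map_smul, smul_eq_mul, sq]
  have hpow := (((hasDerivAt_id (0 : ℝ)).const_add 1).fun_pow 2).mul_const (q x)
  rw [HasLineDerivAt, hscale]
  simpa using hpow

variable (q : QuadraticForm ℝ E) {σ β c' v : ℝ} {c : ℝ → ℝ} {B : E}

theorem hasLineDerivAt_magnetosonicSq_eigenvector {α : ℝ} (hσ : σ ^ 2 = 1)
    (hc : HasDerivAt c c' v) (hv : v ≠ 0) (hdisc : 0 < magnetosonicDiscrim β (c v) v (q B))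
    (hα : α = magnetosonicSq σ β (c v) v (q B)) (hα_ne : α ≠ 0) :
    HasLineDerivAt ℝ (fun p : ℝ × E => magnetosonicSq σ β (c p.1) p.1 (q p.2))
      (σ * (3 * α * q B / v - c' * (v / α) * (α - β ^ 2 / v) ^ 2) /
        √(magnetosonicDiscrim β (c v) v (q B))) (v, B)
      (-(v / α * (α - β ^ 2 / v)), B) := by
  set w := -(v / α * (α - β ^ 2 / v)) with hw
  have hvolume : HasDerivAt (fun t : ℝ => v + t * w) w 0 := by
    simpa using ((hasDerivAt_id (0 : ℝ)).mul_const w).const_add v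
  have hdispersion := magnetosonicSq_dispersion_relation hσ hdisc.le
  have hderiv := hasDerivAt_magnetosonicSq (β := β) (t := 0) (α := α) hσ (by simpa using hc) hvolume
    (hasLineDerivAt_quadraticForm_self q B) (by simpa using hv) (by simpa using hdisc)
    (by simpa using hα)
  simp only [zero_mul, add_zero, zero_smul] at hderiv
  rw [← hα] at hdispersion
  refine HasDerivAt.congr_deriv hderiv ?_
  congr 2
  rw [hw]
  linear_combination (norm := (field_simp; ring)) hdispersion

theorem lineDeriv_mul_sqrt_magnetosonicSq_pos {α : ℝ} (hσ : σ ^ 2 = 1) (hβ : β ≠ 0)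
    (hc : HasDerivAt c c' v) (hcv : 0 < c v) (hc' : c' ≤ 0) (hv : 0 < v) (hB : 0 < q B)
    (hα : α = magnetosonicSq σ β (c v) v (q B)) :
    0 < lineDeriv ℝ (fun p : ℝ × E => σ * √(magnetosonicSq σ β (c p.1) p.1 (q p.2))) (v, B)
      (-(v / α * (α - β ^ 2 / v)), B) := by
  have hdisc : 0 < magnetosonicDiscrim β (c v) v (q B) := magnetosonicDiscrim_pos hcv hv hB
  have hα_pos : 0 < α := hα ▸ magnetosonicSq_pos hσ hβ hcv hv hB.le
  have hderiv := hasLineDerivAt_magnetosonicSq_eigenvector q hσ hc hv.ne' hdisc hα hα_pos.ne'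
  have hspeed : HasLineDerivAt ℝ
      (fun p : ℝ × E => σ * √(magnetosonicSq σ β (c p.1) p.1 (q p.2))) _ (v, B) _ :=
    (HasDerivAt.sqrt hderiv (by simpa [← hα] using hα_pos.ne')).const_mul σ
  have hnum : 0 < 3 * α * q B / v - c' * (v / α) * (α - β ^ 2 / v) ^ 2 := by
    have hconvex : c' * (v / α) * (α - β ^ 2 / v) ^ 2 ≤ 0 :=
      mul_nonpos_of_nonpos_of_nonneg (mul_nonpos_of_nonpos_of_nonneg hc' (by positivity))
        (sq_nonneg _)
    have hmagnetic : 0 < 3 * α * q B / v := by positivity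
    linarith
  rw [hspeed.lineDeriv]
  simp only [zero_smul, add_zero, ← hα]
  rw [← mul_div_assoc, ← mul_div_assoc, ← mul_assoc, ← sq, hσ, one_mul]
  positivity

end LineDeriv

theorem mhd_genuine_nonlinearity_general {E : Type*} [AddCommGroup E] [Module ℝ E]
    (q : QuadraticForm ℝ E) {β : ℝ} (hβ : β ≠ 0) {c2 : ℝ → ℝ} {c2' v : ℝ} {B : E}
    {αp αm : ℝ → E → ℝ} (hαp : ∀ v B, αp v B = (1 / 2) * ((q B + β ^ 2) / v + c2 v +
      √(((q B + β ^ 2) / v + c2 v) ^ 2 - 4 * β ^ 2 * c2 v / v)))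
    (hαm : ∀ v B, αm v B = (1 / 2) * ((q B + β ^ 2) / v + c2 v -
      √(((q B + β ^ 2) / v + c2 v) ^ 2 - 4 * β ^ 2 * c2 v / v)))
    (hc2 : HasDerivAt c2 c2' v) (hc2_pos : 0 < c2 v) (hc2' : c2' ≤ 0) (hv : 0 < v) (hB : 0 < q B) :
    (0 < lineDeriv ℝ (fun p : ℝ × E => -√(αp p.1 p.2)) (v, B)
        (v / αp v B * (αp v B - β ^ 2 / v), -B)) ∧
    (0 < lineDeriv ℝ (fun p : ℝ × E => -√(αm p.1 p.2)) (v, B)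
        (v / αm v B * (β ^ 2 / v - αm v B), B)) ∧
    (0 < lineDeriv ℝ (fun p : ℝ × E => √(αm p.1 p.2)) (v, B)
        (-(v / αm v B * (β ^ 2 / v - αm v B)), -B)) ∧
    (0 < lineDeriv ℝ (fun p : ℝ × E => √(αp p.1 p.2)) (v, B)
        (-(v / αp v B * (αp v B - β ^ 2 / v)), B)) := by
  have hfast : ∀ v B, αp v B = magnetosonicSq 1 β (c2 v) v (q B) := fun v B => by
    rw [hαp, magnetosonicSq, quadraticRoot]; ring_nf
  have hslow : ∀ v B, αm v B = magnetosonicSq (-1) β (c2 v) v (q B) := fun v B => by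
    rw [hαm, magnetosonicSq, quadraticRoot]; ring_nf
  have hfield₆ : 0 < lineDeriv ℝ (fun p : ℝ × E => √(αp p.1 p.2)) (v, B)
      (-(v / αp v B * (αp v B - β ^ 2 / v)), B) := by
    simpa only [hfast, one_mul] using
      lineDeriv_mul_sqrt_magnetosonicSq_pos q (one_pow 2) hβ hc2 hc2_pos hc2' hv hB rfl
  have hfield₃ : 0 < lineDeriv ℝ (fun p : ℝ × E => -√(αm p.1 p.2)) (v, B)
      (v / αm v B * (β ^ 2 / v - αm v B), B) := by
    simpa only [hslow, neg_one_mul, ← mul_neg, neg_sub] using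
      lineDeriv_mul_sqrt_magnetosonicSq_pos q neg_one_sq hβ hc2 hc2_pos hc2' hv hB rfl
  refine ⟨?_, hfield₃, ?_, hfield₆⟩
  · rw [← lineDeriv_neg_neg] at hfield₆
    simpa only [Prod.neg_mk, neg_neg] using hfield₆
  · rw [← lineDeriv_neg_neg] at hfield₃
    simpa only [Prod.neg_mk, neg_neg] using hfield₃

/-- The squared Euclidean norm of the transverse field `(B₂, B₃)`. The norm of `ℝ × ℝ` in Mathlib is
the maximum norm, so its square cannot serve here. -/
noncomputable def planarNormSq : QuadraticForm ℝ (ℝ × ℝ) :=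
  QuadraticMap.prod QuadraticMap.sq QuadraticMap.sq

theorem planarNormSq_apply (B : ℝ × ℝ) : planarNormSq B = B.1 ^ 2 + B.2 ^ 2 := by
  simp only [planarNormSq, QuadraticMap.prod_apply, QuadraticMap.sq_apply, sq]

theorem planarNormSq_posDef : planarNormSq.PosDef :=
  QuadraticMap.PosDef.prod (fun _ => mul_self_pos.2) (fun _ => mul_self_pos.2)

theorem hasDerivAt_polytropicSoundSpeedSq (γ : ℝ) {v : ℝ} (hv : v ≠ 0) :
    HasDerivAt (fun v : ℝ => γ * v ^ (-γ - 1)) (-(γ * (γ + 1) * v ^ (-γ - 2))) v := by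
  refine ((Real.hasDerivAt_rpow_const (Or.inl hv)).const_mul γ).congr_deriv ?_
  ring_nf

/-- For fixed `γ > 1` and `β ≠ 0`, regard `λ₁ = −√α₊`, `λ₃ = −√α₋`, `λ₄ = √α₋`,
`λ₆ = √α₊` as functions of `(v,B₂,B₃)` on `{v > 0, (B₂,B₃) ≠ (0,0)}`. At every such point the
directional derivative of `λ₁`, `λ₃`, `λ₄`, `λ₆` in the direction of the first three components
of the eigenvectors `r₁`, `r₃`, `r₄`, `r₆` respectively is strictly positive (genuine
nonlinearity of the 1st, 3rd, 4th and 6th characteristic fields). -/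
theorem mhd_genuine_nonlinearity
    (γ β : ℝ) (hγ : 1 < γ) (hβ : β ≠ 0)
    (c2 αp αm : ℝ → ℝ → ℝ → ℝ)
    (hc2 : ∀ v B₂ B₃ : ℝ, c2 v B₂ B₃ = γ * v ^ (-γ - 1))
    (hαp : ∀ v B₂ B₃ : ℝ, αp v B₂ B₃ = (1 / 2) * ((B₂ ^ 2 + B₃ ^ 2 + β ^ 2) / v + c2 v B₂ B₃ +
      Real.sqrt (((B₂ ^ 2 + B₃ ^ 2 + β ^ 2) / v + c2 v B₂ B₃) ^ 2 - 4 * β ^ 2 * c2 v B₂ B₃ / v)))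
    (hαm : ∀ v B₂ B₃ : ℝ, αm v B₂ B₃ = (1 / 2) * ((B₂ ^ 2 + B₃ ^ 2 + β ^ 2) / v + c2 v B₂ B₃ -
      Real.sqrt (((B₂ ^ 2 + B₃ ^ 2 + β ^ 2) / v + c2 v B₂ B₃) ^ 2 - 4 * β ^ 2 * c2 v B₂ B₃ / v)))
    (v B₂ B₃ : ℝ) (hv : 0 < v) (hB : (B₂, B₃) ≠ (0, 0)) :
    (0 < lineDeriv ℝ (fun p : ℝ × ℝ × ℝ => -Real.sqrt (αp p.1 p.2.1 p.2.2)) (v, B₂, B₃)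
        (v / αp v B₂ B₃ * (αp v B₂ B₃ - β ^ 2 / v), -B₂, -B₃)) ∧
    (0 < lineDeriv ℝ (fun p : ℝ × ℝ × ℝ => -Real.sqrt (αm p.1 p.2.1 p.2.2)) (v, B₂, B₃)
        (v / αm v B₂ B₃ * (β ^ 2 / v - αm v B₂ B₃), B₂, B₃)) ∧
    (0 < lineDeriv ℝ (fun p : ℝ × ℝ × ℝ => Real.sqrt (αm p.1 p.2.1 p.2.2)) (v, B₂, B₃)
        (-(v / αm v B₂ B₃ * (β ^ 2 / v - αm v B₂ B₃)), -B₂, -B₃)) ∧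
    (0 < lineDeriv ℝ (fun p : ℝ × ℝ × ℝ => Real.sqrt (αp p.1 p.2.1 p.2.2)) (v, B₂, B₃)
        (-(v / αp v B₂ B₃ * (αp v B₂ B₃ - β ^ 2 / v)), B₂, B₃)) := by
  have hc2_pos : 0 < γ * v ^ (-γ - 1) := by positivity
  have hc2_deriv : -(γ * (γ + 1) * v ^ (-γ - 2)) ≤ 0 := neg_nonpos.2 (by positivity)
  exact mhd_genuine_nonlinearity_general planarNormSq hβ
    (αp := fun v B => αp v B.1 B.2) (αm := fun v B => αm v B.1 B.2)
    (fun v B => by simp only [hαp, hc2, planarNormSq_apply])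
    (fun v B => by simp only [hαm, hc2, planarNormSq_apply])
    (hasDerivAt_polytropicSoundSpeedSq γ hv.ne') hc2_pos hc2_deriv hv (planarNormSq_posDef _ hB)
end

section
/- Let γ>1, β∈ℝ, v_l, v_r > 0, σ ≠ 0, and suppose the states U_l, U_r satisfy the six Rankine–Hugoniot conditions with speed σ. Set B_{i,l} = q_{i,l}/v_l and B_{i,r} = q_{i,r}/v_r for i = 2,3. If β²/σ² ≠ v_r, then B_{i,r} − B_{i,l} = ((v_r − v_l)/(β²σ^{-2} − v_r))·B_{i,l} for i=2,3. If in addition σ² < β²/v_r and v_r < v_l (Lax condition for a 3-shock and compression), then for each i=2,3: B_{i,r} − B_{i,l} < 0 if B_{i,l} > 0; B_{i,r} − B_{i,l} > 0 if B_{i,l} < 0; and B_{i,r} = B_{i,l} if B_{i,l} = 0. -/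
/-!
Eliminating the velocity jump `[u_i]` between the two transverse Rankine–Hugoniot conditions gives
`β² [B_i] = σ² [v B_i]`. The product rule `[v B_i] = v_r [B_i] + [v] B_{i,l}` turns this into
`(β² / σ² - v_r) [B_i] = [v] B_{i,l}`. For a compressive 3-shock the factor of `[B_i]` is positive
and `[v]` is negative.
-/

theorem sq_mul_field_jump_eq_sq_mul_q_jump {R : Type*} [CommRing R] {β σ ql qr ul ur Bl Br : R}
    (rh_q : -(β * (ur - ul)) = σ * (qr - ql))
    (rh_u : -(β * (Br - Bl)) = σ * (ur - ul)) :
    β ^ 2 * (Br - Bl) = σ ^ 2 * (qr - ql) := by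
  linear_combination σ * rh_q - β * rh_u

section Field

variable {K : Type*} [Field K] {β σ vl vr ql qr ul ur : K}

theorem q_jump_eq_add (hvl : vl ≠ 0) (hvr : vr ≠ 0) :
    qr - ql = vr * (qr / vr - ql / vl) + (vr - vl) * (ql / vl) := by
  field_simp
  ring

theorem mul_field_jump_eq_volume_jump_mul (hvl : vl ≠ 0) (hvr : vr ≠ 0) (hσ : σ ≠ 0)
    (rh_q : -(β * (ur - ul)) = σ * (qr - ql))
    (rh_u : -(β * (qr / vr - ql / vl)) = σ * (ur - ul)) :
    (β ^ 2 / σ ^ 2 - vr) * (qr / vr - ql / vl) = (vr - vl) * (ql / vl) := by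
  have scaled_jump : β ^ 2 / σ ^ 2 * (qr / vr - ql / vl) = qr - ql := by
    rw [div_mul_eq_mul_div, sq_mul_field_jump_eq_sq_mul_q_jump rh_q rh_u,
      mul_div_cancel_left₀ _ (pow_ne_zero 2 hσ)]
  linear_combination scaled_jump + q_jump_eq_add (ql := ql) (qr := qr) hvl hvr

theorem field_jump_eq_div_mul (hvl : vl ≠ 0) (hvr : vr ≠ 0) (hσ : σ ≠ 0)
    (rh_q : -(β * (ur - ul)) = σ * (qr - ql))
    (rh_u : -(β * (qr / vr - ql / vl)) = σ * (ur - ul))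
    (hne : β ^ 2 / σ ^ 2 ≠ vr) :
    qr / vr - ql / vl = (vr - vl) / (β ^ 2 / σ ^ 2 - vr) * (ql / vl) := by
  rw [div_mul_eq_mul_div, eq_div_iff (sub_ne_zero.mpr hne), mul_comm]
  exact mul_field_jump_eq_volume_jump_mul hvl hvr hσ rh_q rh_u

end Field

section LinearOrderedField

variable {K : Type*} [Field K] [LinearOrder K] [IsStrictOrderedRing K]

theorem lt_sq_div_sq_of_sq_lt_sq_div {β σ v : K} (hv : 0 < v) (hσ : σ ≠ 0)
    (lax : σ ^ 2 < β ^ 2 / v) : v < β ^ 2 / σ ^ 2 :=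
  (lt_div_comm₀ (sq_pos_of_ne_zero hσ) hv).mp lax

theorem mhd_transverse_field_sign_3shock_general {β σ vl vr ql qr ul ur : K}
    (hvl : 0 < vl) (hvr : 0 < vr) (hσ : σ ≠ 0)
    (rh_q : -(β * (ur - ul)) = σ * (qr - ql))
    (rh_u : -(β * (qr / vr - ql / vl)) = σ * (ur - ul)) :
    (β ^ 2 / σ ^ 2 ≠ vr →
      qr / vr - ql / vl = (vr - vl) / (β ^ 2 / σ ^ 2 - vr) * (ql / vl)) ∧
    (σ ^ 2 < β ^ 2 / vr → vr < vl →
      (0 < ql / vl → qr / vr - ql / vl < 0) ∧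
      (ql / vl < 0 → 0 < qr / vr - ql / vl) ∧
      (ql / vl = 0 → qr / vr = ql / vl)) := by
  have jump_eq := field_jump_eq_div_mul hvl.ne' hvr.ne' hσ rh_q rh_u
  refine ⟨jump_eq, fun lax compression => ?_⟩
  have hlt : vr < β ^ 2 / σ ^ 2 := lt_sq_div_sq_of_sq_lt_sq_div hvr hσ lax
  have coeff_neg : (vr - vl) / (β ^ 2 / σ ^ 2 - vr) < 0 :=
    div_neg_of_neg_of_pos (sub_neg.mpr compression) (sub_pos.mpr hlt)
  refine ⟨fun hpos => ?_, fun hneg => ?_, fun hzero => sub_eq_zero.mp ?_⟩ <;>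
    rw [jump_eq hlt.ne']
  · exact mul_neg_of_neg_of_pos coeff_neg hpos
  · exact mul_pos_of_neg_of_neg coeff_neg hneg
  · rw [hzero, mul_zero]

end LinearOrderedField

/-- For states `U_l, U_r` satisfying the Rankine–Hugoniot conditions with speed
`σ ≠ 0`, setting `B_i = q_i/v`: if `β²/σ² ≠ v_r` then
`B_{i,r} − B_{i,l} = ((v_r − v_l)/(β²σ⁻² − v_r))·B_{i,l}` for `i = 2,3`; and if in addition
`σ² < β²/v_r` and `v_r < v_l` (Lax condition for a 3-shock and compression), then
`B_{i,r} − B_{i,l}` has sign opposite to `B_{i,l}` (and vanishes iff `B_{i,l} = 0`). -/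
theorem mhd_transverse_field_sign_3shock
    (γ β σ vl vr q2l q3l u1l u2l u3l q2r q3r u1r u2r u3r : ℝ)
    (hγ : 1 < γ) (hvl : 0 < vl) (hvr : 0 < vr) (hσ : σ ≠ 0)
    (rh1 : -(u1r - u1l) = σ * (vr - vl))
    (rh2 : -(β * (u2r - u2l)) = σ * (q2r - q2l))
    (rh3 : -(β * (u3r - u3l)) = σ * (q3r - q3l))
    (rh4 : (vr ^ (-γ) - vl ^ (-γ)) +
      ((q2r ^ 2 + q3r ^ 2) / (2 * vr ^ 2) - (q2l ^ 2 + q3l ^ 2) / (2 * vl ^ 2)) =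
        σ * (u1r - u1l))
    (rh5 : -(β * (q2r / vr - q2l / vl)) = σ * (u2r - u2l))
    (rh6 : -(β * (q3r / vr - q3l / vl)) = σ * (u3r - u3l)) :
    (β ^ 2 / σ ^ 2 ≠ vr →
      (q2r / vr - q2l / vl = ((vr - vl) / (β ^ 2 / σ ^ 2 - vr)) * (q2l / vl) ∧
       q3r / vr - q3l / vl = ((vr - vl) / (β ^ 2 / σ ^ 2 - vr)) * (q3l / vl))) ∧
    (σ ^ 2 < β ^ 2 / vr → vr < vl →
      ((0 < q2l / vl → q2r / vr - q2l / vl < 0) ∧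
       (q2l / vl < 0 → 0 < q2r / vr - q2l / vl) ∧
       (q2l / vl = 0 → q2r / vr = q2l / vl) ∧
       (0 < q3l / vl → q3r / vr - q3l / vl < 0) ∧
       (q3l / vl < 0 → 0 < q3r / vr - q3l / vl) ∧
       (q3l / vl = 0 → q3r / vr = q3l / vl))) := by
  obtain ⟨jump2, sign2⟩ := mhd_transverse_field_sign_3shock_general hvl hvr hσ rh2 rh5
  obtain ⟨jump3, sign3⟩ := mhd_transverse_field_sign_3shock_general hvl hvr hσ rh3 rh6
  refine ⟨fun hne => ⟨jump2 hne, jump3 hne⟩, fun lax compression => ?_⟩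
  obtain ⟨neg2, pos2, eq2⟩ := sign2 lax compression
  exact ⟨neg2, pos2, eq2, sign3 lax compression⟩
end

section
/- Let γ>1, β∈ℝ, v_l, v_r > 0, σ∈ℝ, and suppose states U_l, U_r satisfy the six Rankine–Hugoniot conditions with speed σ. Then, writing [f] := f_r − f_l, the entropy production satisfies the identity [G] − σ[η] = −σ·(v_r − v_l)·( ∫₀¹ ( s·p(v_r) + (1−s)·p(v_l) − p(s·v_r + (1−s)·v_l) ) ds + ¼·Σ_{i=2,3} ( q_{i,r}/v_r − q_{i,l}/v_l )² ), where p(v) = v^{-γ}. -/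
/-!
With `B = q / v`, the entropy flux is a sum of products of the fluxes `u₁`, `u`, `P = p + ‖B‖² / 2`
and `B`. Applying the product rule `[fg] = ⟨f⟩[g] + [f]⟨g⟩`, with `⟨·⟩` the arithmetic mean of the
two sides, and replacing each flux jump through the Rankine–Hugoniot conditions makes `[G]` a
multiple of `σ`, whose kinetic energies cancel against those in `σ[η]`. What is left is `-σ` times
the sum of `⟨p⟩[v] + [e]`, which is the error of the trapezoidal rule for `∫ p` because the internal
energy `e` has derivative `-p`, and of the purely algebraic magnetic term
`½⟨‖B‖²⟩[v] - ⟨B⟩·[vB] + ½[v‖B‖²] = ¼[v]‖[B]‖²`.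
-/

open MeasureTheory

section TrapezoidalRule

variable {F : Type*} [NormedAddCommGroup F] {f : ℝ → F} {a b : ℝ}

theorem intervalIntegrable_comp_segment (hf : IntervalIntegrable f volume a b) :
    IntervalIntegrable (fun s => f (s * b + (1 - s) * a)) volume 0 1 := by
  have segment_eq (s : ℝ) : (b - a) * s + a = s * b + (1 - s) * a := by ring
  rcases eq_or_ne a b with rfl | hab
  · simp [← segment_eq]
  · have hba : b - a ≠ 0 := sub_ne_zero.2 hab.symm
    simpa [hba, segment_eq] using (hf.comp_add_right a).comp_mul_left (c := b - a)

variable [NormedSpace ℝ F]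

theorem smul_integral_comp_segment (f : ℝ → F) (a b : ℝ) :
    (b - a) • ∫ s in (0 : ℝ)..1, f (s * b + (1 - s) * a) = ∫ x in a..b, f x := by
  have segment_eq (s : ℝ) : (b - a) * s + a = s * b + (1 - s) * a := by ring
  simpa [segment_eq] using
    intervalIntegral.smul_integral_comp_mul_add f (b - a) a (a := 0) (b := 1)

theorem integral_segment [CompleteSpace F] (x y : F) :
    ∫ s in (0 : ℝ)..1, (s • y + (1 - s) • x) = (1 / 2 : ℝ) • (x + y) := by
  rw [intervalIntegral.integral_add
    (Continuous.intervalIntegrable (by fun_prop) _ _)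
    (Continuous.intervalIntegrable (by fun_prop) _ _)]
  have integral_one_sub : ∫ s in (0 : ℝ)..1, (1 - s) = 1 / 2 := by
    rw [intervalIntegral.integral_comp_sub_left (fun s => s)]; norm_num
  simp [integral_one_sub, add_comm]

theorem smul_integral_segment_sub_comp_segment [CompleteSpace F]
    (hf : IntervalIntegrable f volume a b) :
    (b - a) • ∫ s in (0 : ℝ)..1, (s • f b + (1 - s) • f a - f (s * b + (1 - s) * a)) =
      ((b - a) / 2) • (f a + f b) - ∫ x in a..b, f x := by
  rw [intervalIntegral.integral_sub (Continuous.intervalIntegrable (by fun_prop) _ _)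
      (intervalIntegrable_comp_segment hf),
    smul_sub, smul_integral_comp_segment, integral_segment, smul_smul, mul_one_div]

end TrapezoidalRule

theorem hasDerivAt_rpow_one_sub_div_sub_one {γ v : ℝ} (hγ : γ ≠ 1) (hv : v ≠ 0) :
    HasDerivAt (fun x : ℝ => x ^ (1 - γ) / (γ - 1)) (-v ^ (-γ)) v := by
  have hγ' : γ - 1 ≠ 0 := sub_ne_zero.2 hγ
  refine ((Real.hasDerivAt_rpow_const (p := 1 - γ) (.inl hv)).div_const (γ - 1)).congr_deriv ?_
  rw [sub_sub_cancel_left]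
  field_simp
  ring

section InnerProductSpace

variable {E : Type*} [NormedAddCommGroup E] [InnerProductSpace ℝ E]

theorem inner_sub_inner_eq_mean (x y x' y' : E) :
    inner ℝ x' y' - inner ℝ x y =
      (inner ℝ (x + x') (y' - y) + inner ℝ (x' - x) (y + y')) / 2 := by
  simp only [inner_add_left, inner_add_right, inner_sub_left, inner_sub_right]
  ring

theorem inner_add_smul_sub_smul (a b : ℝ) (x y : E) :
    inner ℝ (x + y) (b • y - a • x) =
      b * ‖y‖ ^ 2 - a * ‖x‖ ^ 2 + (b - a) * (‖x‖ ^ 2 + ‖y‖ ^ 2 - ‖y - x‖ ^ 2) / 2 := by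
  rw [norm_sub_sq_real]
  simp only [inner_add_left, inner_sub_right, inner_smul_right, real_inner_self_eq_norm_sq,
    real_inner_comm x y]
  ring

end InnerProductSpace

/-- A state of one-dimensional magnetohydrodynamics in Lagrangian coordinates, with transverse
components in `E`: specific volume `v`, transverse magnetic variable `q = v B`, longitudinal
velocity `u₁` and transverse velocity `u`. -/
structure MHDState (E : Type*) where
  v : ℝ
  q : E
  u₁ : ℝ
  u : E

namespace MHDState

variable {E : Type*} [NormedAddCommGroup E] [InnerProductSpace ℝ E]

/-- The transverse magnetic field `B = q / v`, with junk value `0` at `v = 0`. -/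
noncomputable def magneticField (U : MHDState E) : E := U.v⁻¹ • U.q

/-- The sum of the gas pressure, given by the law `p`, and the magnetic pressure. -/
noncomputable def totalPressure (p : ℝ → ℝ) (U : MHDState E) : ℝ :=
  p U.v + ‖U.magneticField‖ ^ 2 / 2

/-- The mathematical entropy `η`, which is the total energy; `e` is the internal energy as a
function of the specific volume. -/
noncomputable def entropy (e : ℝ → ℝ) (U : MHDState E) : ℝ :=
  e U.v + (U.u₁ ^ 2 + ‖U.u‖ ^ 2) / 2 + ‖U.q‖ ^ 2 / (2 * U.v)

/-- The flux `G` of the entropy, for the pressure law `p` and the longitudinal magnetic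
field `β`. -/
noncomputable def entropyFlux (p : ℝ → ℝ) (β : ℝ) (U : MHDState E) : ℝ :=
  U.totalPressure p * U.u₁ - β * inner ℝ U.magneticField U.u

/-- The jump conditions across a discontinuity of speed `σ` from the left state `L` to the right
state `R`. -/
structure RankineHugoniot (p : ℝ → ℝ) (β σ : ℝ) (L R : MHDState E) : Prop where
  volume : -(R.u₁ - L.u₁) = σ * (R.v - L.v)
  induction : -(β • (R.u - L.u)) = σ • (R.q - L.q)
  longitudinal_momentum : R.totalPressure p - L.totalPressure p = σ * (R.u₁ - L.u₁)
  transverse_momentum : -(β • (R.magneticField - L.magneticField)) = σ • (R.u - L.u)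

variable {p e : ℝ → ℝ} {β σ : ℝ} {L R : MHDState E}

theorem v_smul_magneticField {U : MHDState E} (hU : U.v ≠ 0) : U.v • U.magneticField = U.q :=
  smul_inv_smul₀ hU U.q

theorem norm_sq_q_div_two_mul_v {U : MHDState E} (hU : U.v ≠ 0) :
    ‖U.q‖ ^ 2 / (2 * U.v) = U.v * ‖U.magneticField‖ ^ 2 / 2 := by
  rw [← v_smul_magneticField hU, norm_smul, mul_pow, Real.norm_eq_abs, sq_abs]
  field_simp

theorem RankineHugoniot.inner_magneticField_jump (h : RankineHugoniot p β σ L R) :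
    β * (inner ℝ R.magneticField R.u - inner ℝ L.magneticField L.u) =
      -σ * (inner ℝ (L.magneticField + R.magneticField) (R.q - L.q) +
        (‖R.u‖ ^ 2 - ‖L.u‖ ^ 2)) / 2 := by
  have velocity_jump := congrArg (inner ℝ (L.magneticField + R.magneticField)) h.induction
  have field_jump := congrArg (fun x => inner ℝ x (L.u + R.u)) h.transverse_momentum
  have kinetic_jump : inner ℝ (R.u - L.u) (L.u + R.u) = ‖R.u‖ ^ 2 - ‖L.u‖ ^ 2 := by
    rw [real_inner_comm, inner_add_left, inner_sub_right, inner_sub_right, real_inner_comm R.u,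
      real_inner_self_eq_norm_sq, real_inner_self_eq_norm_sq]
    ring
  simp only [inner_neg_left, inner_neg_right, real_inner_smul_left, real_inner_smul_right,
    kinetic_jump] at velocity_jump field_jump
  rw [inner_sub_inner_eq_mean]
  linear_combination -(velocity_jump + field_jump) / 2

theorem RankineHugoniot.entropyFlux_jump (h : RankineHugoniot p β σ L R) :
    R.entropyFlux p β - L.entropyFlux p β =
      σ * ((R.u₁ ^ 2 - L.u₁ ^ 2) + (‖R.u‖ ^ 2 - ‖L.u‖ ^ 2) +
        inner ℝ (L.magneticField + R.magneticField) (R.q - L.q) -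
        (L.totalPressure p + R.totalPressure p) * (R.v - L.v)) / 2 := by
  simp only [entropyFlux]
  linear_combination (L.u₁ + R.u₁) / 2 * h.longitudinal_momentum -
    (L.totalPressure p + R.totalPressure p) / 2 * h.volume - h.inner_magneticField_jump

theorem inner_magneticField_q_jump (hL : L.v ≠ 0) (hR : R.v ≠ 0) :
    inner ℝ (L.magneticField + R.magneticField) (R.q - L.q) =
      R.v * ‖R.magneticField‖ ^ 2 - L.v * ‖L.magneticField‖ ^ 2 +
        (R.v - L.v) * (‖L.magneticField‖ ^ 2 + ‖R.magneticField‖ ^ 2 -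
          ‖R.magneticField - L.magneticField‖ ^ 2) / 2 := by
  rw [← v_smul_magneticField hL, ← v_smul_magneticField hR, inner_add_smul_sub_smul]

theorem RankineHugoniot.entropy_production (h : RankineHugoniot p β σ L R)
    (hL : L.v ≠ 0) (hR : R.v ≠ 0) (e : ℝ → ℝ) :
    R.entropyFlux p β - L.entropyFlux p β - σ * (R.entropy e - L.entropy e) =
      -σ * ((R.v - L.v) / 2 * (p L.v + p R.v) + (e R.v - e L.v) +
        (R.v - L.v) * (1 / 4 * ‖R.magneticField - L.magneticField‖ ^ 2)) := by
  rw [h.entropyFlux_jump, inner_magneticField_q_jump hL hR]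
  simp only [entropy, totalPressure, norm_sq_q_div_two_mul_v hL, norm_sq_q_div_two_mul_v hR]
  ring

/-- The state of three-dimensional magnetohydrodynamics with the given scalar components; its
transverse plane is `EuclideanSpace ℝ (Fin 2)`, spanned by the second and third axes. -/
def ofComponents (v q₂ q₃ u₁ u₂ u₃ : ℝ) : MHDState (EuclideanSpace ℝ (Fin 2)) where
  v := v
  q := !₂[q₂, q₃]
  u₁ := u₁
  u := !₂[u₂, u₃]

section Components

variable (v q₂ q₃ u₁ u₂ u₃ v' q₂' q₃' u₁' u₂' u₃' : ℝ)

theorem magneticField_ofComponents :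
    (ofComponents v q₂ q₃ u₁ u₂ u₃).magneticField = !₂[q₂ / v, q₃ / v] := by
  ext i
  fin_cases i <;> simp [magneticField, ofComponents, div_eq_inv_mul]

theorem totalPressure_ofComponents :
    (ofComponents v q₂ q₃ u₁ u₂ u₃).totalPressure p =
      p v + (q₂ ^ 2 + q₃ ^ 2) / (2 * v ^ 2) := by
  have norm_sq : ‖!₂[q₂ / v, q₃ / v]‖ ^ 2 = (q₂ / v) ^ 2 + (q₃ / v) ^ 2 := by
    simp [EuclideanSpace.real_norm_sq_eq]
  rw [totalPressure, magneticField_ofComponents, norm_sq, ofComponents]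
  ring

theorem entropy_ofComponents :
    (ofComponents v q₂ q₃ u₁ u₂ u₃).entropy e =
      e v + (u₁ ^ 2 + u₂ ^ 2 + u₃ ^ 2) / 2 + (q₂ ^ 2 + q₃ ^ 2) / (2 * v) := by
  simp [entropy, ofComponents, EuclideanSpace.real_norm_sq_eq, add_assoc]

theorem entropyFlux_ofComponents :
    (ofComponents v q₂ q₃ u₁ u₂ u₃).entropyFlux p β =
      (p v + (q₂ ^ 2 + q₃ ^ 2) / (2 * v ^ 2)) * u₁ - β / v * (q₂ * u₂ + q₃ * u₃) := by
  have inner_eq : inner ℝ !₂[q₂ / v, q₃ / v] !₂[u₂, u₃] = q₂ / v * u₂ + q₃ / v * u₃ := by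
    simp [PiLp.inner_apply, mul_comm]
  rw [entropyFlux, totalPressure_ofComponents, magneticField_ofComponents, ofComponents, inner_eq]
  ring

theorem norm_sq_magneticField_ofComponents_sub :
    ‖(ofComponents v' q₂' q₃' u₁' u₂' u₃').magneticField -
        (ofComponents v q₂ q₃ u₁ u₂ u₃).magneticField‖ ^ 2 =
      (q₂' / v' - q₂ / v) ^ 2 + (q₃' / v' - q₃ / v) ^ 2 := by
  simp [magneticField_ofComponents, EuclideanSpace.real_norm_sq_eq]

variable {v q₂ q₃ u₁ u₂ u₃ v' q₂' q₃' u₁' u₂' u₃'}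

theorem rankineHugoniot_ofComponents
    (volume : -(u₁' - u₁) = σ * (v' - v))
    (induction₂ : -(β * (u₂' - u₂)) = σ * (q₂' - q₂))
    (induction₃ : -(β * (u₃' - u₃)) = σ * (q₃' - q₃))
    (momentum₁ : (p v' - p v) +
      ((q₂' ^ 2 + q₃' ^ 2) / (2 * v' ^ 2) - (q₂ ^ 2 + q₃ ^ 2) / (2 * v ^ 2)) = σ * (u₁' - u₁))
    (momentum₂ : -(β * (q₂' / v' - q₂ / v)) = σ * (u₂' - u₂))
    (momentum₃ : -(β * (q₃' / v' - q₃ / v)) = σ * (u₃' - u₃)) :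
    RankineHugoniot p β σ (ofComponents v q₂ q₃ u₁ u₂ u₃)
      (ofComponents v' q₂' q₃' u₁' u₂' u₃') where
  volume := volume
  induction := by
    ext i
    fin_cases i
    · simpa [ofComponents] using induction₂
    · simpa [ofComponents] using induction₃
  longitudinal_momentum := by
    rw [totalPressure_ofComponents, totalPressure_ofComponents, add_sub_add_comm]
    exact momentum₁
  transverse_momentum := by
    rw [magneticField_ofComponents, magneticField_ofComponents]
    ext i
    fin_cases i
    · simpa [ofComponents] using momentum₂
    · simpa [ofComponents] using momentum₃

end Components

end MHDState

theorem mhd_entropy_production_identity_general {E : Type*} [NormedAddCommGroup E]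
    [InnerProductSpace ℝ E] {p e : ℝ → ℝ} {β σ : ℝ} {L R : MHDState E}
    (hL : L.v ≠ 0) (hR : R.v ≠ 0) (hp : IntervalIntegrable p volume L.v R.v)
    (he : ∀ v ∈ Set.uIcc L.v R.v, HasDerivAt e (-p v) v)
    (h : MHDState.RankineHugoniot p β σ L R) :
    R.entropyFlux p β - L.entropyFlux p β - σ * (R.entropy e - L.entropy e) =
      -σ * (R.v - L.v) *
        ((∫ s in (0 : ℝ)..1, (s * p R.v + (1 - s) * p L.v - p (s * R.v + (1 - s) * L.v))) +
          1 / 4 * ‖R.magneticField - L.magneticField‖ ^ 2) := by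
  have energy_jump : -∫ v in L.v..R.v, p v = e R.v - e L.v := by
    rw [← intervalIntegral.integral_neg]
    exact intervalIntegral.integral_eq_sub_of_hasDerivAt he hp.neg
  have trapezoidal_error := smul_integral_segment_sub_comp_segment hp
  simp only [smul_eq_mul] at trapezoidal_error
  rw [h.entropy_production hL hR e]
  linear_combination σ * trapezoidal_error + σ * energy_jump

/-- For states `U_l, U_r` satisfying the Rankine–Hugoniot conditions with speed
`σ`, the entropy production satisfies the identity
`[G] − σ[η] = −σ (v_r − v_l) ( ∫₀¹ (s p(v_r) + (1−s) p(v_l) − p(s v_r + (1−s) v_l)) ds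
  + ¼ Σ_{i=2,3} (q_{i,r}/v_r − q_{i,l}/v_l)² )`, where `p(v) = v^(−γ)`,
`η(U) = v^(1−γ)/(γ−1) + ½(u₁²+u₂²+u₃²) + (q₂²+q₃²)/(2v)` and
`G(U) = (p(v) + (q₂²+q₃²)/(2v²))u₁ − (β/v)(q₂u₂+q₃u₃)`. -/
theorem mhd_entropy_production_identity
    (γ β σ vl vr q2l q3l u1l u2l u3l q2r q3r u1r u2r u3r : ℝ)
    (hγ : 1 < γ) (hvl : 0 < vl) (hvr : 0 < vr)
    (rh1 : -(u1r - u1l) = σ * (vr - vl))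
    (rh2 : -(β * (u2r - u2l)) = σ * (q2r - q2l))
    (rh3 : -(β * (u3r - u3l)) = σ * (q3r - q3l))
    (rh4 : (vr ^ (-γ) - vl ^ (-γ)) +
      ((q2r ^ 2 + q3r ^ 2) / (2 * vr ^ 2) - (q2l ^ 2 + q3l ^ 2) / (2 * vl ^ 2)) =
        σ * (u1r - u1l))
    (rh5 : -(β * (q2r / vr - q2l / vl)) = σ * (u2r - u2l))
    (rh6 : -(β * (q3r / vr - q3l / vl)) = σ * (u3r - u3l))
    (etal etar Gl Gr : ℝ)
    (hetal : etal = vl ^ (1 - γ) / (γ - 1) + (u1l ^ 2 + u2l ^ 2 + u3l ^ 2) / 2 +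
      (q2l ^ 2 + q3l ^ 2) / (2 * vl))
    (hetar : etar = vr ^ (1 - γ) / (γ - 1) + (u1r ^ 2 + u2r ^ 2 + u3r ^ 2) / 2 +
      (q2r ^ 2 + q3r ^ 2) / (2 * vr))
    (hGl : Gl = (vl ^ (-γ) + (q2l ^ 2 + q3l ^ 2) / (2 * vl ^ 2)) * u1l -
      (β / vl) * (q2l * u2l + q3l * u3l))
    (hGr : Gr = (vr ^ (-γ) + (q2r ^ 2 + q3r ^ 2) / (2 * vr ^ 2)) * u1r -
      (β / vr) * (q2r * u2r + q3r * u3r)) :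
    (Gr - Gl) - σ * (etar - etal) =
      -σ * (vr - vl) *
        ((∫ s in (0 : ℝ)..1,
            (s * vr ^ (-γ) + (1 - s) * vl ^ (-γ) - (s * vr + (1 - s) * vl) ^ (-γ))) +
          (1 / 4) * ((q2r / vr - q2l / vl) ^ 2 + (q3r / vr - q3l / vl) ^ 2)) := by
  have pos_of_mem {v : ℝ} (hv : v ∈ Set.uIcc vl vr) : 0 < v := (lt_min hvl hvr).trans_le hv.1
  have production := mhd_entropy_production_identity_general hvl.ne' hvr.ne'
    (intervalIntegral.intervalIntegrable_rpow (.inr fun h => (pos_of_mem h).false))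
    (fun v hv => hasDerivAt_rpow_one_sub_div_sub_one hγ.ne' (pos_of_mem hv).ne')
    (MHDState.rankineHugoniot_ofComponents rh1 rh2 rh3 rh4 rh5 rh6)
  rwa [MHDState.entropyFlux_ofComponents, MHDState.entropyFlux_ofComponents,
    MHDState.entropy_ofComponents, MHDState.entropy_ofComponents,
    MHDState.norm_sq_magneticField_ofComponents_sub, ← hGl, ← hGr, ← hetal, ← hetar] at production
end

section
/- Let γ>1, β ≠ 0, and let W : I → (0,∞)×ℝ⁵ (I an interval containing 0), W(t) = (v(t),B₂(t),B₃(t),u₁(t),u₂(t),u₃(t)), be a differentiable solution of W′(t) = r₆(W(t)), where r₆(W) = (−(v/α₊)(α₊−β²/v), B₂, B₃, (v/√α₊)(α₊−β²/v), −βB₂/√α₊, −βB₃/√α₊). Then B_i(t) = B_i(0)·e^t for i = 2,3 (so in particular the sign of each B_i is preserved along the curve), and if (B₂(0),B₃(0)) ≠ (0,0) then v(t) is strictly decreasing on I. The same two conclusions hold for differentiable solutions of W′(t) = −r₁(W(t)), where r₁(W) = ((v/α₊)(α₊−β²/v), −B₂, −B₃, (v/√α₊)(α₊−β²/v), −βB₂/√α₊,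 −βB₃/√α₊). -/
/-!
`α₊` is the larger root of `X² - ((|B|² + β²)/v + c²) X + β²c²/v`, whose value at `X = β²/v` is
`-β²|B|²/v²`. Hence `α₊ > β²/v` wherever `B ≠ 0`, and `v′ < 0` there. The equation `B′ = B`
decouples from the rest, so `B` grows like `eᵗ` and vanishes either identically or nowhere.
-/

theorem eq_exp_smul_of_hasDerivWithinAt_smul {E : Type*} [NormedAddCommGroup E] [NormedSpace ℝ E]
    {I : Set ℝ} (hI : I.OrdConnected) {a : ℝ} {f : ℝ → E}
    (hf : ∀ t ∈ I, HasDerivWithinAt f (a • f t) I t) {s t : ℝ} (hs : s ∈ I) (ht : t ∈ I) :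
    f t = Real.exp (a * (t - s)) • f s := by
  let g : ℝ → E := fun x => Real.exp (-(a * (x - s))) • f x
  have hg : ∀ x ∈ I, HasDerivWithinAt g 0 I x := fun x hx => by
    have hexp : HasDerivWithinAt (fun y => Real.exp (-(a * (y - s))))
        (Real.exp (-(a * (x - s))) * -(a * 1)) I x :=
      (((hasDerivWithinAt_id x I).sub_const s).const_mul a).neg.exp
    refine (hexp.smul (hf x hx)).congr_deriv ?_
    module
  have hconst : g t = g s := by
    simpa [sub_eq_zero] using
      hI.convex.norm_image_sub_le_of_norm_hasDerivWithin_le hg (fun _ _ => norm_zero.le) hs ht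
  calc f t = Real.exp (a * (t - s)) • g t := by simp [g, smul_smul, ← Real.exp_add]
    _ = Real.exp (a * (t - s)) • f s := by simp [hconst, g]

theorem eq_mul_exp_of_hasDerivWithinAt_self {I : Set ℝ} (hI : I.OrdConnected) {f : ℝ → ℝ}
    (hf : ∀ t ∈ I, HasDerivWithinAt f (f t) I t) (h0 : 0 ∈ I) {t : ℝ} (ht : t ∈ I) :
    f t = f 0 * Real.exp t := by
  have hexp : f t = Real.exp (1 * (t - 0)) • f 0 :=
    eq_exp_smul_of_hasDerivWithinAt_smul hI (by simpa only [one_smul] using hf) h0 ht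
  rwa [one_mul, sub_zero, smul_eq_mul, mul_comm] at hexp

theorem lt_half_add_sqrt_discrim_of_quadratic_neg {p q x : ℝ} (h : x ^ 2 - p * x + q < 0) :
    x < 1 / 2 * (p + √(p ^ 2 - 4 * q)) := by
  have hsqrt : 2 * x - p < √(p ^ 2 - 4 * q) := Real.lt_sqrt_of_sq_lt (by linarith)
  linarith

/-- The squared fast magnetosonic speed `α₊` (in Lagrangian mass coordinates), with longitudinal
field `β`, squared sound speed `cSq = c²`, specific volume `v` and squared transverse field
`BSq = |B|²`. Taking `cSq` as a free argument separates it from the pressure law. -/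
noncomputable def fastSpeedSq (β cSq v BSq : ℝ) : ℝ :=
  1 / 2 * ((BSq + β ^ 2) / v + cSq + √(((BSq + β ^ 2) / v + cSq) ^ 2 - 4 * β ^ 2 * cSq / v))

section fastSpeedSq

variable {β v BSq : ℝ} (cSq : ℝ)

theorem sq_div_lt_fastSpeedSq (hβ : β ≠ 0) (hv : 0 < v) (hB : 0 < BSq) :
    β ^ 2 / v < fastSpeedSq β cSq v BSq := by
  have hquad : (β ^ 2 / v) ^ 2 - ((BSq + β ^ 2) / v + cSq) * (β ^ 2 / v) + β ^ 2 * cSq / v < 0 :=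
    calc
      _ = -(β ^ 2 * BSq / v ^ 2) := by ring
      _ < 0 := neg_neg_of_pos (by positivity)
  have hroot := lt_half_add_sqrt_discrim_of_quadratic_neg hquad
  rwa [← mul_div_assoc, ← mul_assoc] at hroot

theorem rarefaction_volume_rate_neg (hβ : β ≠ 0) (hv : 0 < v) (hB : 0 < BSq) :
    -(v / fastSpeedSq β cSq v BSq) * (fastSpeedSq β cSq v BSq - β ^ 2 / v) < 0 := by
  have hlt := sq_div_lt_fastSpeedSq cSq hβ hv hB
  have hpos : 0 < fastSpeedSq β cSq v BSq := lt_trans (by positivity) hlt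
  exact mul_neg_of_neg_of_pos (neg_neg_of_pos (div_pos hv hpos)) (sub_pos.2 hlt)

end fastSpeedSq

theorem mhd_rarefaction_curves_B_and_v_general {β : ℝ} (hβ : β ≠ 0) (cSq : ℝ → ℝ)
    {I : Set ℝ} (hI : I.OrdConnected) (h0I : (0 : ℝ) ∈ I) {v B₂ B₃ : ℝ → ℝ}
    (hvpos : ∀ t ∈ I, 0 < v t)
    (hv' : ∀ t ∈ I, HasDerivWithinAt v
      (-(v t / fastSpeedSq β (cSq t) (v t) (B₂ t ^ 2 + B₃ t ^ 2)) *
        (fastSpeedSq β (cSq t) (v t) (B₂ t ^ 2 + B₃ t ^ 2) - β ^ 2 / v t)) I t)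
    (hB₂' : ∀ t ∈ I, HasDerivWithinAt B₂ (B₂ t) I t)
    (hB₃' : ∀ t ∈ I, HasDerivWithinAt B₃ (B₃ t) I t) :
    (∀ t ∈ I, B₂ t = B₂ 0 * Real.exp t ∧ B₃ t = B₃ 0 * Real.exp t) ∧
    ((B₂ 0, B₃ 0) ≠ (0, 0) → StrictAntiOn v I) := by
  have hB₂ := fun t => eq_mul_exp_of_hasDerivWithinAt_self hI hB₂' h0I (t := t)
  have hB₃ := fun t => eq_mul_exp_of_hasDerivWithinAt_self hI hB₃' h0I (t := t)
  refine ⟨fun t ht => ⟨hB₂ t ht, hB₃ t ht⟩, fun hne => ?_⟩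
  have hBSq : ∀ t ∈ I, 0 < B₂ t ^ 2 + B₃ t ^ 2 := fun t ht => by
    have hne_zero : B₂ 0 ≠ 0 ∨ B₃ 0 ≠ 0 := by
      simpa only [ne_eq, Prod.mk.injEq, not_and_or] using hne
    rw [hB₂ t ht, hB₃ t ht]
    rcases hne_zero with h | h <;> positivity
  exact strictAntiOn_of_hasDerivWithinAt_neg hI.convex
    (fun t ht => (hv' t ht).continuousWithinAt)
    (fun t ht => (hv' t (interior_subset ht)).mono interior_subset)
    fun t ht => rarefaction_volume_rate_neg (cSq t) hβ (hvpos t (interior_subset ht))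
      (hBSq t (interior_subset ht))

/-- Along any differentiable solution on an interval `I ∋ 0` of the ODE
`W′ = r₆(W)`, with
`r₆(W) = (−(v/α₊)(α₊−β²/v), B₂, B₃, (v/√α₊)(α₊−β²/v), −βB₂/√α₊, −βB₃/√α₊)`, one has
`B_i(t) = B_i(0) eᵗ` for `i = 2,3` (so the sign of each `B_i` is preserved), and if
`(B₂(0),B₃(0)) ≠ (0,0)` then `v` is strictly decreasing on `I`. The same two conclusions hold
for solutions of `W′ = −r₁(W)`; the sign `ε = 1` corresponds to `r₆` and `ε = −1` to `−r₁`
(the two fields only differ in the `u₁` component among the quantities involved). -/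
theorem mhd_rarefaction_curves_B_and_v
    (γ β : ℝ) (hγ : 1 < γ) (hβ : β ≠ 0)
    (αp : ℝ → ℝ → ℝ → ℝ)
    (hαp : ∀ v B₂ B₃ : ℝ, αp v B₂ B₃ =
      (1 / 2) * ((B₂ ^ 2 + B₃ ^ 2 + β ^ 2) / v + γ * v ^ (-γ - 1) +
        Real.sqrt (((B₂ ^ 2 + B₃ ^ 2 + β ^ 2) / v + γ * v ^ (-γ - 1)) ^ 2 -
          4 * β ^ 2 * (γ * v ^ (-γ - 1)) / v)))
    (I : Set ℝ) (hI : I.OrdConnected) (h0I : (0 : ℝ) ∈ I)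
    (v B₂ B₃ u₁ u₂ u₃ : ℝ → ℝ)
    (hvpos : ∀ t ∈ I, 0 < v t)
    (ε : ℝ) (hε : ε = 1 ∨ ε = -1)
    (hv' : ∀ t ∈ I, HasDerivAt v
      (-(v t / αp (v t) (B₂ t) (B₃ t)) * (αp (v t) (B₂ t) (B₃ t) - β ^ 2 / v t)) t)
    (hB₂' : ∀ t ∈ I, HasDerivAt B₂ (B₂ t) t)
    (hB₃' : ∀ t ∈ I, HasDerivAt B₃ (B₃ t) t)
    (hu₁' : ∀ t ∈ I, HasDerivAt u₁
      (ε * (v t / Real.sqrt (αp (v t) (B₂ t) (B₃ t))) *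
        (αp (v t) (B₂ t) (B₃ t) - β ^ 2 / v t)) t)
    (hu₂' : ∀ t ∈ I, HasDerivAt u₂
      (-(β * B₂ t / Real.sqrt (αp (v t) (B₂ t) (B₃ t)))) t)
    (hu₃' : ∀ t ∈ I, HasDerivAt u₃
      (-(β * B₃ t / Real.sqrt (αp (v t) (B₂ t) (B₃ t)))) t) :
    (∀ t ∈ I, B₂ t = B₂ 0 * Real.exp t ∧ B₃ t = B₃ 0 * Real.exp t) ∧
    ((B₂ 0, B₃ 0) ≠ (0, 0) → StrictAntiOn v I) := by
  simp only [hαp] at hv'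
  exact mhd_rarefaction_curves_B_and_v_general hβ (fun t => γ * v t ^ (-γ - 1)) hI h0I hvpos
    (fun t ht => (hv' t ht).hasDerivWithinAt) (fun t ht => (hB₂' t ht).hasDerivWithinAt)
    (fun t ht => (hB₃' t ht).hasDerivWithinAt)
end

section
/- For every γ>1, the function η(v,q₂,q₃,u₁,u₂,u₃) = v^{1-γ}/(γ-1) + ½(u₁²+u₂²+u₃²) + (q₂²+q₃²)/(2v) is strictly convex on the open convex set {(v,q₂,q₃,u₁,u₂,u₃) ∈ ℝ⁶ : v > 0}. -/
/-!
The entropy splits as `e(v) + g(v, (q, u))` with `g = ½‖u‖² + ‖q‖² / (2v)`. The energy `e` is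
strictly convex because `e' = -p` and the pressure `p` is strictly decreasing. By Sedrakyan's
inequality `g` is jointly convex; being linear on each ray `ℝ₊ (v, (q, 0))`, it is not
strictly convex, but it is so in `(q, u)` for fixed `v`. Between two distinct states either `v`
changes and `e` gives the strict inequality, or `v` is constant and `g` does.
-/

open Set

section OrderedModule

variable {𝕜 E F β : Type*} [AddCommMonoid E] [AddCommMonoid F] [AddCommMonoid β] [PartialOrder β]

theorem strictConvexOn_smul [CommSemiring 𝕜] [PartialOrder 𝕜] [Module 𝕜 E] [Module 𝕜 β]
    [PosSMulStrictMono 𝕜 β] {s : Set E} {f : E → β} {c : 𝕜} (hc : 0 < c)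
    (hf : StrictConvexOn 𝕜 s f) : StrictConvexOn 𝕜 s fun x => c • f x := by
  refine ⟨hf.1, fun x hx y hy hxy a b ha hb hab => ?_⟩
  calc c • f (a • x + b • y)
      < c • (a • f x + b • f y) := smul_lt_smul_of_pos_left (hf.2 hx hy hxy ha hb hab) hc
    _ = a • c • f x + b • c • f y := by rw [smul_add, smul_comm c a, smul_comm c b]

variable [Semiring 𝕜] [PartialOrder 𝕜] [Module 𝕜 E] [Module 𝕜 F] [Module 𝕜 β]

theorem strictConvexOn_comp_linearMap {s : Set F} {f : F → β} (hf : StrictConvexOn 𝕜 s f)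
    {L : E →ₗ[𝕜] F} (hL : Function.Injective L) : StrictConvexOn 𝕜 (L ⁻¹' s) (f ∘ L) :=
  ⟨hf.1.linear_preimage L, fun x hx y hy hxy a b ha hb hab => by
    simpa using hf.2 hx hy (hL.ne hxy) ha hb hab⟩

theorem strictConvexOn_prod_add_of_fiber [IsOrderedCancelAddMonoid β] {s : Set E} {t : Set F}
    {f : E → β} {g : E × F → β} (hf : StrictConvexOn 𝕜 s f) (hg : ConvexOn 𝕜 (s ×ˢ t) g)
    (hfiber : ∀ x ∈ s, StrictConvexOn 𝕜 t fun y => g (x, y)) :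
    StrictConvexOn 𝕜 (s ×ˢ t) fun z => f z.1 + g z := by
  refine ⟨hg.1, ?_⟩
  rintro ⟨x, y⟩ ⟨hx, hy⟩ ⟨x', y'⟩ ⟨hx', hy'⟩ hne a b ha hb hab
  rw [smul_add, smul_add, add_add_add_comm]
  by_cases hxx' : x = x'
  · subst hxx'
    have hyy' : y ≠ y' := fun h => hne (congrArg (Prod.mk x) h)
    refine add_lt_add_of_le_of_lt ?_ ?_
    · simp only [Prod.smul_mk, Prod.mk_add_mk, Convex.combo_self hab, le_refl]
    · simpa only [Prod.smul_mk, Prod.mk_add_mk, Convex.combo_self hab] using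
        (hfiber x hx).2 hy hy' hyy' ha hb hab
  · exact add_lt_add_of_lt_of_le (hf.2 hx hx' hxx' ha hb hab)
      (hg.2 (mk_mem_prod hx hy) (mk_mem_prod hx' hy') ha.le hb.le hab)

theorem strictConvexOn_prod_add [IsOrderedCancelAddMonoid β] [PosSMulMono 𝕜 β] {s : Set E}
    {t : Set F} {f : E → β} {g : F → β} (hf : StrictConvexOn 𝕜 s f) (hg : StrictConvexOn 𝕜 t g) :
    StrictConvexOn 𝕜 (s ×ˢ t) fun z => f z.1 + g z.2 :=
  strictConvexOn_prod_add_of_fiber hf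
    ((hg.convexOn.comp_linearMap (LinearMap.snd 𝕜 E F)).subset (fun _ hz => hz.2) (hf.1.prod hg.1))
    fun _ _ => hg

end OrderedModule

theorem strictConvexOn_comp_norm {E : Type*} [NormedAddCommGroup E] [NormedSpace ℝ E]
    [StrictConvexSpace ℝ E] {φ : ℝ → ℝ} (hφ : StrictConvexOn ℝ (Ici 0) φ)
    (hφ_mono : StrictMonoOn φ (Ici 0)) : StrictConvexOn ℝ univ fun x : E => φ ‖x‖ := by
  refine ⟨convex_univ, fun x _ y _ hxy a b ha hb hab => ?_⟩
  by_cases hnorm : ‖x‖ = ‖y‖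
  · calc φ ‖a • x + b • y‖
        < φ ‖y‖ := hφ_mono (norm_nonneg _) (norm_nonneg _)
          (norm_combo_lt_of_ne hnorm.le le_rfl hxy ha hb hab)
      _ = a • φ ‖x‖ + b • φ ‖y‖ := by rw [hnorm, Convex.combo_self hab]
  · calc φ ‖a • x + b • y‖
        ≤ φ (a • ‖x‖ + b • ‖y‖) := hφ_mono.monotoneOn (norm_nonneg _)
          (mem_Ici.2 (by positivity))
          ((convexOn_norm convex_univ).2 (mem_univ x) (mem_univ y) ha.le hb.le hab)
      _ < a • φ ‖x‖ + b • φ ‖y‖ := hφ.2 (norm_nonneg x) (norm_nonneg y) hnorm ha hb hab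

theorem strictConvexOn_norm_sq_div_const {E : Type*} [NormedAddCommGroup E] [NormedSpace ℝ E]
    [StrictConvexSpace ℝ E] {c : ℝ} (hc : 0 < c) :
    StrictConvexOn ℝ univ fun x : E => ‖x‖ ^ 2 / c := by
  simpa only [div_eq_inv_mul, smul_eq_mul] using strictConvexOn_smul (inv_pos.2 hc)
    (strictConvexOn_comp_norm (E := E) (strictConvexOn_pow le_rfl)
      (pow_left_strictMonoOn₀ two_ne_zero))

theorem convexOn_norm_sq_snd_div_fst {E : Type*} [SeminormedAddCommGroup E] [NormedSpace ℝ E] :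
    ConvexOn ℝ (Ioi 0 ×ˢ univ) fun z : ℝ × E => ‖z.2‖ ^ 2 / z.1 := by
  refine convexOn_iff_forall_pos.2 ⟨(convex_Ioi 0).prod convex_univ, ?_⟩
  rintro ⟨v, p⟩ ⟨hv, -⟩ ⟨w, q⟩ ⟨hw, -⟩ a b ha hb hab
  rw [mem_Ioi] at hv hw
  have sedrakyan : (a * ‖p‖ + b * ‖q‖) ^ 2 / (a * v + b * w) ≤
      (a * ‖p‖) ^ 2 / (a * v) + (b * ‖q‖) ^ 2 / (b * w) := by
    simpa [Fin.sum_univ_two] using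
      Finset.univ.sq_sum_div_le_sum_sq_div ![a * ‖p‖, b * ‖q‖] (g := ![a * v, b * w])
        (by simp [Fin.forall_fin_two, ha, hb, hv, hw])
  calc ‖a • p + b • q‖ ^ 2 / (a * v + b * w)
      ≤ (a * ‖p‖ + b * ‖q‖) ^ 2 / (a * v + b * w) := by
        gcongr
        exact (convexOn_norm convex_univ).2 (mem_univ p) (mem_univ q) ha.le hb.le hab
    _ ≤ (a * ‖p‖) ^ 2 / (a * v) + (b * ‖q‖) ^ 2 / (b * w) := sedrakyan
    _ = a * (‖p‖ ^ 2 / v) + b * (‖q‖ ^ 2 / w) := by field_simp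

theorem strictConvexOn_rpow_one_sub_div {γ : ℝ} (hγ : 0 < γ) (hγ1 : γ ≠ 1) :
    StrictConvexOn ℝ (Ioi 0) fun v : ℝ => v ^ (1 - γ) / (γ - 1) := by
  have hasDerivAt_neg_pressure {v : ℝ} (hv : 0 < v) :
      HasDerivAt (fun v : ℝ => v ^ (1 - γ) / (γ - 1)) (-v ^ (-γ)) v := by
    have hγ' : γ - 1 ≠ 0 := sub_ne_zero.2 hγ1
    refine ((Real.hasDerivAt_rpow_const (Or.inl hv.ne')).div_const (γ - 1)).congr_deriv ?_
    rw [sub_sub_cancel_left]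
    field_simp
    ring
  refine StrictMonoOn.strictConvexOn_of_deriv (convex_Ioi 0)
    (fun v hv => (hasDerivAt_neg_pressure hv).continuousAt.continuousWithinAt) ?_
  rw [interior_Ioi]
  exact (Real.strictAntiOn_rpow_Ioi_of_exponent_neg (neg_neg_of_pos hγ)).neg.congr
    fun v hv => (hasDerivAt_neg_pressure hv).deriv.symm

theorem mhd_entropy_strictly_convex_general {E F : Type*}
    [NormedAddCommGroup E] [NormedSpace ℝ E] [StrictConvexSpace ℝ E]
    [NormedAddCommGroup F] [NormedSpace ℝ F] [StrictConvexSpace ℝ F]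
    {s : Set ℝ} (hs : s ⊆ Ioi 0) {e : ℝ → ℝ} (he : StrictConvexOn ℝ s e) :
    StrictConvexOn ℝ (s ×ˢ univ)
      fun U : ℝ × E × F => e U.1 + ‖U.2.2‖ ^ 2 / 2 + ‖U.2.1‖ ^ 2 / (2 * U.1) := by
  have domain_convex : Convex ℝ (s ×ˢ (univ : Set (E × F))) := he.1.prod convex_univ
  have kinetic_strictConvex : StrictConvexOn ℝ univ fun u : F => ‖u‖ ^ 2 / 2 :=
    strictConvexOn_norm_sq_div_const two_pos
  have kinetic_convex : ConvexOn ℝ (s ×ˢ univ) fun U : ℝ × E × F => ‖U.2.2‖ ^ 2 / 2 :=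
    (kinetic_strictConvex.convexOn.comp_linearMap
      (LinearMap.snd ℝ E F ∘ₗ LinearMap.snd ℝ ℝ (E × F))).subset (subset_univ _) domain_convex
  have magnetic_convex :
      ConvexOn ℝ (s ×ˢ univ) fun U : ℝ × E × F => ‖U.2.1‖ ^ 2 / (2 * U.1) :=
    ((convexOn_norm_sq_snd_div_fst (E := E)).comp_linearMap
      (((2 : ℝ) • LinearMap.id).prodMap (LinearMap.fst ℝ E F))).subset
      (fun _ hU => ⟨by simpa using hs hU.1, mem_univ _⟩) domain_convex
  have fiber_strictConvex (v : ℝ) (hv : v ∈ s) :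
      StrictConvexOn ℝ univ fun w : E × F => ‖w.2‖ ^ 2 / 2 + ‖w.1‖ ^ 2 / (2 * v) := by
    simpa only [univ_prod_univ, add_comm] using strictConvexOn_prod_add
      (strictConvexOn_norm_sq_div_const (E := E) (mul_pos two_pos (hs hv))) kinetic_strictConvex
  simpa only [Pi.add_apply, add_assoc] using
    strictConvexOn_prod_add_of_fiber he (kinetic_convex.add magnetic_convex) fiber_strictConvex

/-- The splitting `U ↦ (v, q, u)` of a conservative state `U = (v, q₂, q₃, u₁, u₂, u₃)`, with the
Euclidean norm on the magnetic part `q` and on the velocity `u`. -/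
noncomputable def conservativeSplitting :
    (Fin 6 → ℝ) →ₗ[ℝ] ℝ × EuclideanSpace ℝ (Fin 2) × EuclideanSpace ℝ (Fin 3) where
  toFun U := (U 0, !₂[U 1, U 2], !₂[U 3, U 4, U 5])
  map_add' U V := by ext i <;> (try fin_cases i) <;> rfl
  map_smul' c U := by ext i <;> (try fin_cases i) <;> rfl

theorem conservativeSplitting_injective : Function.Injective conservativeSplitting := by
  intro U V h
  simp only [conservativeSplitting, LinearMap.coe_mk, AddHom.coe_mk, Prod.mk.injEq] at h
  ext i
  fin_cases i <;> simp_all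

/-- For every `γ > 1`, the entropy
`η(v,q₂,q₃,u₁,u₂,u₃) = v^(1−γ)/(γ−1) + ½(u₁²+u₂²+u₃²) + (q₂²+q₃²)/(2v)` is strictly convex on
the open convex set `{U ∈ ℝ⁶ : v > 0}` (in conservative variables `U = (v,q₂,q₃,u₁,u₂,u₃)`). -/
theorem mhd_entropy_strictly_convex (γ : ℝ) (hγ : 1 < γ) :
    StrictConvexOn ℝ {U : Fin 6 → ℝ | 0 < U 0}
      (fun U : Fin 6 → ℝ =>
        (U 0) ^ (1 - γ) / (γ - 1) + (U 3 ^ 2 + U 4 ^ 2 + U 5 ^ 2) / 2 +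
          (U 1 ^ 2 + U 2 ^ 2) / (2 * U 0)) := by
  have energy_convex := strictConvexOn_rpow_one_sub_div (zero_lt_one.trans hγ) hγ.ne'
  have split_convex := strictConvexOn_comp_linearMap
    (mhd_entropy_strictly_convex_general subset_rfl energy_convex) conservativeSplitting_injective
  simpa [preimage, Function.comp_def, conservativeSplitting, EuclideanSpace.real_norm_sq_eq,
    Fin.sum_univ_three] using split_convex
end
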